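/- arXiv:1103.6102 — 2 statements merged into one kernel-verified Lean document; each statement's English description precedes it below -/
import Mathlib

section
/- Let E ⊂ ℝ^{N×n} be bounded. Assume that there exist compact sets E_δ ⊂ ℝ^{N×n}, δ > 0, such that, setting K_δ := Rco_f E_δ and K := Rco_f E, one has K_δ ⊂ int K for every δ > 0 and: (i) for every ε > 0 there exists δ_0 > 0 such that dist(η; E) ≤ ε for all η ∈ E_δ and all δ ∈ (0, δ_0]; (ii) if η ∈ int K then there exists δ_0 > 0 such that η ∈ K_δ for all δ ∈ (0, δ_0]. Then int Rco_f E has the relaxation property with respect to E. -/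
open MeasureTheory Filter

attribute [local instance] Classical.propDecidable
attribute [local instance] Matrix.frobeniusNormedAddCommGroup Matrix.frobeniusNormedSpace

noncomputable section

/-- The space of real `N × n` matrices. -/
abbrev Mat (N n : ℕ) : Type := Matrix (Fin N) (Fin n) ℝ

/-- A function `f : ℝ^{N×n} → ℝ` is rank one convex. -/
def RankOneConvexFun {N n : ℕ} (f : Mat N n → ℝ) : Prop :=
  ∀ lam ∈ Set.Icc (0:ℝ) 1, ∀ ξ η : Mat N n, (ξ - η).rank = 1 →
    f (lam • ξ + (1 - lam) • η) ≤ lam * f ξ + (1 - lam) * f η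

/-- The hull `Rco_f E`. -/
def RcoF {N n : ℕ} (E : Set (Mat N n)) : Set (Mat N n) :=
  {ξ | ∀ f : Mat N n → ℝ, RankOneConvexFun f → (∀ η ∈ E, f η ≤ 0) → f ξ ≤ 0}

/-- A set of matrices is rank one convex. -/
def RankOneConvexSet {N n : ℕ} (S : Set (Mat N n)) : Prop :=
  ∀ A ∈ S, ∀ B ∈ S, (A - B).rank = 1 → ∀ t ∈ Set.Icc (0:ℝ) 1, t • A + (1 - t) • B ∈ S

/-- The property `(H_I(U))`, phrased on lists of (weight, matrix) pairs. -/
inductive HIProp {N n : ℕ} (U : Set (Mat N n)) : List (ℝ × Mat N n) → Prop where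
  | single (l : ℝ) (ξ : Mat N n) (hξ : ξ ∈ U) : HIProp U [(l, ξ)]
  | pair (l₁ l₂ : ℝ) (ξ₁ ξ₂ : Mat N n) (h₁ : ξ₁ ∈ U) (h₂ : ξ₂ ∈ U)
      (hrank : (ξ₁ - ξ₂).rank = 1) : HIProp U [(l₁, ξ₁), (l₂, ξ₂)]
  | step (L rest : List (ℝ × Mat N n)) (l₁ l₂ : ℝ) (ξ₁ ξ₂ : Mat N n)
      (hperm : L.Perm ((l₁, ξ₁) :: (l₂, ξ₂) :: rest)) (hrest : rest ≠ [])
      (h₁ : ξ₁ ∈ U) (h₂ : ξ₂ ∈ U) (hrank : (ξ₁ - ξ₂).rank = 1)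
      (hrec : HIProp U ((l₁ + l₂, ((l₁ + l₂)⁻¹) • (l₁ • ξ₁ + l₂ • ξ₂)) :: rest)) :
      HIProp U L

/-- The family `(λ_i, ξ_i)_{1 ≤ i ≤ I}` satisfies `(H_I(U))`. -/
def SatisfiesH {N n : ℕ} (U : Set (Mat N n)) (I : ℕ) (l : Fin I → ℝ)
    (ξ : Fin I → Mat N n) : Prop :=
  HIProp U (List.ofFn fun i => (l i, ξ i))

/-- The gradient of a map `u : ℝ^n → ℝ^N`, as an `N × n` matrix. -/
def matGrad {N n : ℕ} (u : (Fin n → ℝ) → Fin N → ℝ) (x : Fin n → ℝ) : Mat N n :=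
  LinearMap.toMatrix' (fderiv ℝ u x).toLinearMap

/-- `u` is affine on the set `s`. -/
def AffineOn {N n : ℕ} (u : (Fin n → ℝ) → Fin N → ℝ) (s : Set (Fin n → ℝ)) : Prop :=
  ∃ (A : Mat N n) (b : Fin N → ℝ), ∀ x ∈ s, u x = A.mulVec x + b

/-- `u` is piecewise affine on the open set `Ω`. -/
def PiecewiseAffineOn {N n : ℕ} (u : (Fin n → ℝ) → Fin N → ℝ)
    (Ω : Set (Fin n → ℝ)) : Prop :=
  ContinuousOn u (closure Ω) ∧
  ∃ P : ℕ → Set (Fin n → ℝ),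
    (∀ k, IsOpen (P k)) ∧ (∀ k, P k ⊆ Ω) ∧
    (∀ k l, k ≠ l → Disjoint (P k) (P l)) ∧
    volume (Ω \ ⋃ k, P k) = 0 ∧ ∀ k, AffineOn u (P k)

/-- `u` is piecewise `C¹` on the open set `Ω`. -/
def PiecewiseC1On {N n : ℕ} (u : (Fin n → ℝ) → Fin N → ℝ)
    (Ω : Set (Fin n → ℝ)) : Prop :=
  ContinuousOn u (closure Ω) ∧
  ∃ P : ℕ → Set (Fin n → ℝ),
    (∀ k, IsOpen (P k)) ∧ (∀ k, P k ⊆ Ω) ∧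
    (∀ k l, k ≠ l → Disjoint (P k) (P l)) ∧
    volume (Ω \ ⋃ k, P k) = 0 ∧ ∀ k, ContDiffOn ℝ 1 u (P k)

/-- `u ∈ φ + W₀^{1,∞}(Ω; ℝ^N)`: `u` is Lipschitz on `closure Ω` and agrees with `φ`
on the boundary of `Ω`. -/
def MemW01inf {N n : ℕ} (Ω : Set (Fin n → ℝ)) (φ u : (Fin n → ℝ) → Fin N → ℝ) : Prop :=
  (∃ C : NNReal, LipschitzOnWith C u (closure Ω)) ∧ ∀ x ∈ frontier Ω, u x = φ x

/-- `K` has the relaxation property with respect to `E`. -/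
def HasRelaxationProperty {N n : ℕ} (K E : Set (Mat N n)) : Prop :=
  ∀ Ω : Set (Fin n → ℝ), IsOpen Ω → Bornology.IsBounded Ω →
    ∀ ξ ∈ K, ∀ b : Fin N → ℝ,
      ∃ u : ℕ → (Fin n → ℝ) → Fin N → ℝ,
        (∀ ν, PiecewiseAffineOn (u ν) Ω) ∧
        (∀ ν, MemW01inf Ω (fun x => ξ.mulVec x + b) (u ν)) ∧
        (∀ ν, ∀ᵐ x ∂(volume.restrict Ω), matGrad (u ν) x ∈ E ∪ K) ∧
        (∃ C : NNReal, ∀ ν, LipschitzOnWith C (u ν) (closure Ω)) ∧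
        TendstoUniformlyOn u (fun x => ξ.mulVec x + b) atTop (closure Ω) ∧
        Tendsto (fun ν => ∫ x in Ω, Metric.infDist (matGrad (u ν) x) E) atTop (nhds 0)

/-- The singular values of a square matrix, in nondecreasing order:
the square roots of the eigenvalues of `ξ ξᵀ`, sorted. -/
def singularValues {n : ℕ} (ξ : Matrix (Fin n) (Fin n) ℝ) (i : Fin n) : ℝ :=
  Real.sqrt ((Matrix.isHermitian_mul_conjTranspose_self ξ).eigenvalues
    (Tuple.sort (Matrix.isHermitian_mul_conjTranspose_self ξ).eigenvalues i))

end

section Part1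
open Set

lemma exists_vecMulVec_of_rank {N n : ℕ} (M : Mat N n) (h : M.rank = 1) :
    ∃ (a : Fin N → ℝ) (b : Fin n → ℝ), b ≠ 0 ∧ M = Matrix.vecMulVec a b := by
  rw [Matrix.rank, finrank_eq_one_iff'] at h
  obtain ⟨⟨a, ha⟩, ha0, hv⟩ := h
  have hcol : ∀ j, ∃ c : ℝ, c • a = M.mulVec (Pi.single j 1) := by
    intro j
    obtain ⟨c, hc⟩ := hv ⟨M.mulVec (Pi.single j 1), ⟨Pi.single j 1, rfl⟩⟩
    exact ⟨c, congrArg Subtype.val hc⟩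
  choose b hb using hcol
  have hM : M = Matrix.vecMulVec a b := by
    ext i j
    have := congrFun (hb j) i
    simp at this
    rw [Matrix.vecMulVec_apply, ← this]; ring
  refine ⟨a, b, ?_, hM⟩
  rintro rfl
  apply ha0
  obtain ⟨x, hx⟩ := ha
  have hM0 : M = 0 := by rw [hM]; ext i j; simp [Matrix.vecMulVec_apply]
  apply Subtype.ext
  simp only
  rw [← hx, hM0]; simp

lemma rank_smul_eq {N n : ℕ} (M : Mat N n) (c : ℝ) (hc : c ≠ 0) : (c • M).rank = M.rank := by
  apply le_antisymm
  · have := Matrix.rank_mul_le_left M (c • (1 : Matrix (Fin n) (Fin n) ℝ))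
    simpa using this
  · have := Matrix.rank_mul_le_left (c • M) (c⁻¹ • (1 : Matrix (Fin n) (Fin n) ℝ))
    simpa [smul_smul, hc] using this

lemma rank_eq_one_of_entry {N n : ℕ} (M : Mat N n) (i : Fin N) (j : Fin n) (hM : M i j ≠ 0)
    (h : ∀ i' j', (i', j') ≠ (i, j) → M i' j' = 0) : M.rank = 1 := by
  have h1 : M = Matrix.vecMulVec (Pi.single i (M i j)) (Pi.single j 1) := by
    ext i' j'
    rw [Matrix.vecMulVec_apply]
    by_cases hi : i' = i
    · by_cases hj : j' = j
      · subst hi hj; simp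
      · rw [h i' j' (by simp [hj])]; simp [hj]
    · rw [h i' j' (by simp [hi])]; simp [hi]
  apply le_antisymm
  · rw [h1]; exact Matrix.rank_vecMulVec_le _ _
  · rw [Nat.one_le_iff_ne_zero]
    intro h0
    rw [Matrix.rank, Submodule.finrank_eq_zero] at h0
    have := LinearMap.range_eq_bot.1 h0
    have h2 := congrFun (LinearMap.congr_fun this (Pi.single j 1)) i
    simp at h2
    exact hM h2

lemma RankOneConvexFun.convexOn_line {N n : ℕ} {f : Mat N n → ℝ} (hf : RankOneConvexFun f)
    (ξ v : Mat N n) (hv : v.rank = 1) : ConvexOn ℝ univ (fun r : ℝ => f (ξ + r • v)) := by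
  refine ⟨convex_univ, ?_⟩
  intro x _ y _ a b ha hb hab
  by_cases hxy : x = y
  · subst hxy
    simp only [smul_eq_mul]
    rw [← add_mul, ← add_mul, hab, one_mul, one_mul]
  · have hb' : b = 1 - a := by linarith
    subst hb'
    have := hf a ⟨ha, by linarith⟩ (ξ + x • v) (ξ + y • v) (by
      rw [add_sub_add_left_eq_sub, ← sub_smul, rank_smul_eq _ _ (sub_ne_zero.2 hxy), hv])
    simp only [smul_eq_mul]
    refine le_trans (le_of_eq ?_) this
    congr 1
    module

/-- three point inequality along one coordinate -/
def SepConvex {ι : Type} (f : (ι → ℝ) → ℝ) : Prop :=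
  ∀ (x : ι → ℝ) (i : ι) (s t l : ℝ), 0 ≤ l → l ≤ 1 →
    f (Function.update x i (l * s + (1 - l) * t)) ≤
      l * f (Function.update x i s) + (1 - l) * f (Function.update x i t)

lemma SepConvex.bddAbove {ι : Type} [Fintype ι] {f : (ι → ℝ) → ℝ} (hf : SepConvex f)
    (x₀ : ι → ℝ) (r : ℝ) (hr : 0 < r) : ∃ M, ∀ x, (∀ i, |x i - x₀ i| ≤ r) → f x ≤ M := by
  let vert : (ι → Bool) → (ι → ℝ) := fun e i => if e i then x₀ i + r else x₀ i - r
  obtain ⟨M, hM⟩ := (Set.finite_range (fun e => f (vert e))).bddAbove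
  refine ⟨M, ?_⟩
  have key : ∀ T : Finset ι, ∀ x : ι → ℝ, (∀ i ∈ T, |x i - x₀ i| ≤ r) →
      (∀ i ∉ T, x i = x₀ i + r ∨ x i = x₀ i - r) → f x ≤ M := by
    intro T
    induction T using Finset.induction_on with
    | empty =>
      intro x _ h
      have : x = vert (fun i => decide (x i = x₀ i + r)) := by
        ext i
        by_cases hi : x i = x₀ i + r
        · simp [vert, hi]
        · simp only [vert, hi]
          simpa using (h i (by simp)).resolve_left hi
      rw [this]
      exact hM ⟨_, rfl⟩
    | insert j T hj ih =>
      intro x h1 h2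
      have e1 : f (Function.update x j (x₀ j + r)) ≤ M := by
        apply ih
        · intro i hi
          have : i ≠ j := by rintro rfl; exact hj hi
          simpa [this] using h1 i (by simp [hi])
        · intro i hi
          by_cases hij : i = j
          · subst hij; simp
          · simpa [hij] using h2 i (by simp [hi, hij])
      have e2 : f (Function.update x j (x₀ j - r)) ≤ M := by
        apply ih
        · intro i hi
          have : i ≠ j := by rintro rfl; exact hj hi
          simpa [this] using h1 i (by simp [hi])
        · intro i hi
          by_cases hij : i = j
          · subst hij; simp
          · simpa [hij] using h2 i (by simp [hi, hij])
      have hx := abs_le.1 (h1 j (by simp))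
      set l := (x j - x₀ j + r) / (2 * r) with hl
      have hl0 : 0 ≤ l := div_nonneg (by linarith) (by linarith)
      have hl1 : l ≤ 1 := by rw [hl, div_le_one (by linarith)]; linarith
      have := hf x j (x₀ j + r) (x₀ j - r) l hl0 hl1
      have hxj : l * (x₀ j + r) + (1 - l) * (x₀ j - r) = x j := by
        rw [hl]; field_simp; ring
      rw [hxj, Function.update_eq_self] at this
      nlinarith
  intro x hx
  exact key Finset.univ x (fun i _ => hx i) (fun i hi => absurd (Finset.mem_univ i) hi)

lemma SepConvex.lower {ι : Type} [Fintype ι] {f : (ι → ℝ) → ℝ} (hf : SepConvex f)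
    (x₀ : ι → ℝ) (c : ℝ) (hc : c < f x₀) : ∃ r > 0, ∀ x, (∀ i, |x i - x₀ i| < r) → c < f x := by
  obtain ⟨M, hM⟩ := hf.bddAbove x₀ 1 one_pos
  have key : ∀ T : Finset ι, ∀ q, 0 < q → q ≤ 1 → ∀ x : ι → ℝ, (∀ i ∈ T, |x i - x₀ i| ≤ q) →
      (∀ i ∉ T, x i = x₀ i) → M - f x ≤ (1 + q) ^ T.card * (M - f x₀) := by
    intro T
    induction T using Finset.induction_on with
    | empty =>
      intro q _ _ x _ h
      have : x = x₀ := by ext i; exact h i (by simp)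
      simp [this]
    | insert j T hj ih =>
      intro q hq hq1 x h1 h2
      set z := Function.update x j (x₀ j) with hz
      have e1 := ih q hq hq1 z (by
        intro i hi
        have : i ≠ j := by rintro rfl; exact hj hi
        simpa [hz, this] using h1 i (by simp [hi])) (by
        intro i hi
        by_cases hij : i = j
        · subst hij; simp [hz]
        · simpa [hz, hij] using h2 i (by simp [hi, hij]))
      rw [Finset.card_insert_of_notMem hj, pow_succ]
      have hxM : f z ≤ M := by
        apply hM
        intro i
        by_cases hij : i = j
        · subst hij; simp [hz]
        · by_cases hi : i ∈ T
          · simpa [hz, hij] using (h1 i (by simp [hi])).trans hq1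
          · have := h2 i (by simp [hi, hij])
            simp [hz, hij, this]
      have hstep : M - f x ≤ (1 + q) * (M - f z) := by
        set d := x j - x₀ j with hd
        have hdq : |d| ≤ q := h1 j (by simp)
        set s : ℝ := if 0 ≤ d then -1 else 1 with hs
        have hds : d = - s * |d| := by
          rw [hs]; split_ifs with h
          · rw [abs_of_nonneg h]; ring
          · rw [abs_of_neg (not_le.1 h)]; ring
        have hsabs : |s| ≤ 1 := by
          rw [hs]; split_ifs <;> simp
        have hden : 0 < 1 + |d| := by positivity
        have := hf x j (x j) (x₀ j + s) (1 / (1 + |d|)) (by positivity)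
          (by rw [div_le_one hden]; linarith [abs_nonneg d])
        have hcomb : 1 / (1 + |d|) * x j + (1 - 1 / (1 + |d|)) * (x₀ j + s) = x₀ j := by
          have hxj : x j = x₀ j + d := by rw [hd]; ring
          rw [hxj]
          nth_rw 2 [hds]
          field_simp
          ring
        rw [hcomb, Function.update_eq_self, ← hz] at this
        have hw : f (Function.update x j (x₀ j + s)) ≤ M := by
          apply hM
          intro i
          by_cases hij : i = j
          · subst hij; simpa using hsabs
          · by_cases hi : i ∈ T
            · simpa [hij] using (h1 i (by simp [hi])).trans hq1
            · have := h2 i (by simp [hi, hij])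
              simp [hij, this]
        set W := f (Function.update x j (x₀ j + s))
        have h3 : (1 + |d|) * f z ≤ f x + |d| * W := by
          have := mul_le_mul_of_nonneg_left this hden.le
          have e : (1 + |d|) * (1 / (1 + |d|) * f x + (1 - 1 / (1 + |d|)) * W) = f x + |d| * W := by
            field_simp; ring
          linarith
        nlinarith [abs_nonneg d, mul_le_mul_of_nonneg_left hw (abs_nonneg d),
          mul_nonneg (sub_nonneg.2 hdq) (sub_nonneg.2 hxM)]
      calc M - f x ≤ (1 + q) * (M - f z) := hstep
        _ ≤ (1 + q) * ((1 + q) ^ T.card * (M - f x₀)) := by gcongr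
        _ = _ := by ring
  have hcont : Filter.Tendsto (fun q : ℝ => (1 + q) ^ (Finset.univ : Finset ι).card * (M - f x₀))
      (nhdsWithin 0 (Set.Ioi 0)) (nhds (M - f x₀)) := by
    have : Continuous (fun q : ℝ => (1 + q) ^ (Finset.univ : Finset ι).card * (M - f x₀)) := by
      fun_prop
    have := this.tendsto 0
    simp only [add_zero, one_pow, one_mul] at this
    exact this.mono_left nhdsWithin_le_nhds
  have hev := hcont.eventually (gt_mem_nhds (show M - f x₀ < M - c by linarith))
  have hev2 : ∀ᶠ q : ℝ in nhdsWithin 0 (Set.Ioi 0), q ∈ Set.Ioc (0:ℝ) 1 :=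
    Ioc_mem_nhdsGT one_pos
  obtain ⟨q, hq, hq0, hq1⟩ := (hev.and hev2).exists
  refine ⟨q, hq0, fun x hx => ?_⟩
  have := key Finset.univ q hq0 hq1 x (fun i _ => (hx i).le)
    (fun i hi => absurd (Finset.mem_univ i) hi)
  linarith

lemma abs_entry_le {N n : ℕ} : ∃ C : ℝ, 0 < C ∧ ∀ (A : Mat N n) i j, |A i j| ≤ C * ‖A‖ := by
  have h : ∀ i j, ∃ C : ℝ, 0 < C ∧ ∀ A : Mat N n, |A i j| ≤ C * ‖A‖ := by
    intro i j
    let l : Mat N n →ₗ[ℝ] ℝ :=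
      { toFun := fun A => A i j, map_add' := fun _ _ => rfl, map_smul' := fun _ _ => rfl }
    obtain ⟨C, hC, h⟩ := l.toContinuousLinearMap.bound
    exact ⟨C, hC, fun A => h A⟩
  choose C hC h using h
  refine ⟨1 + ∑ i, ∑ j, C i j, ?_, fun A i j => (h i j A).trans ?_⟩
  · have : 0 ≤ ∑ i, ∑ j, C i j := Finset.sum_nonneg fun i _ => Finset.sum_nonneg fun j _ => (hC i j).le
    linarith
  · gcongr
    have h1 : C i j ≤ ∑ j, C i j :=
      Finset.single_le_sum (f := fun j => C i j) (fun j _ => (hC i j).le) (Finset.mem_univ j)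
    have h2 : ∑ j, C i j ≤ ∑ i, ∑ j, C i j :=
      Finset.single_le_sum (f := fun i => ∑ j, C i j)
        (fun i _ => Finset.sum_nonneg fun j _ => (hC i j).le) (Finset.mem_univ i)
    linarith

lemma RankOneConvexFun.lower {N n : ℕ} {f : Mat N n → ℝ} (hf : RankOneConvexFun f)
    (ξ : Mat N n) (c : ℝ) (hc : c < f ξ) : ∃ r > 0, ∀ η ∈ Metric.ball ξ r, c < f η := by
  let F : (Fin N × Fin n → ℝ) → ℝ := fun x => f (Matrix.of fun i j => x (i, j))
  have hF : SepConvex F := by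
    intro x i s t l hl0 hl1
    by_cases hst : s = t
    · subst hst
      have e1 : l * s + (1 - l) * s = s := by ring
      rw [e1]
      apply le_of_eq
      ring
    · simp only [F]
      have := hf l ⟨hl0, hl1⟩ (Matrix.of fun a b => Function.update x i s (a, b))
        (Matrix.of fun a b => Function.update x i t (a, b))
        (by
          apply rank_eq_one_of_entry _ i.1 i.2
          · simp [sub_ne_zero.2 hst]
          · rintro i' j' h
            have : (i', j') ≠ i := h
            simp [this])
      refine le_trans (le_of_eq ?_) (this.trans (le_of_eq ?_))
      · congr 1
        ext a b
        by_cases hab : (a, b) = i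
        · subst hab; simp
        · simp [hab]; ring
      · congr!
  obtain ⟨r, hr, h⟩ := hF.lower (fun p => ξ p.1 p.2) c hc
  obtain ⟨C, hC, hCb⟩ := abs_entry_le (N := N) (n := n)
  refine ⟨r / C, by positivity, fun η hη => ?_⟩
  have := h (fun p => η p.1 p.2) (by
    intro p
    have h1 := hCb (η - ξ) p.1 p.2
    rw [Metric.mem_ball, dist_eq_norm, lt_div_iff₀ hC] at hη
    rw [Matrix.sub_apply] at h1
    linarith)
  exact this

lemma rankOneConvex_const_mul {N n : ℕ} {f : Mat N n → ℝ} (hf : RankOneConvexFun f) (c d : ℝ)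
    (hc : 0 ≤ c) : RankOneConvexFun (fun x => c * f x + d) := by
  intro l hl ξ η h
  have := mul_le_mul_of_nonneg_left (hf l hl ξ η h) hc
  simp only
  linarith

lemma rankOneConvex_max {N n : ℕ} {f g : Mat N n → ℝ} (hf : RankOneConvexFun f)
    (hg : RankOneConvexFun g) : RankOneConvexFun (fun x => max (f x) (g x)) := by
  intro l hl ξ η h
  have h1 := hf l hl ξ η h
  have h2 := hg l hl ξ η h
  have hl0 := hl.1
  have hl1 : 0 ≤ 1 - l := by linarith [hl.2]
  apply max_le
  · exact h1.trans (by gcongr <;> exact le_max_left _ _)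
  · exact h2.trans (by gcongr <;> exact le_max_right _ _)

lemma rankOneConvex_norm {N n : ℕ} (R : ℝ) : RankOneConvexFun (fun x : Mat N n => ‖x‖ - R) := by
  intro l hl ξ η h
  have h1 := norm_add_le (l • ξ) ((1 - l) • η)
  rw [norm_smul, norm_smul, Real.norm_of_nonneg hl.1,
    Real.norm_of_nonneg (sub_nonneg.2 hl.2)] at h1
  simp only
  linarith

lemma subset_RcoF {N n : ℕ} (E : Set (Mat N n)) : E ⊆ RcoF E := fun _ hx _ _ hf => hf _ hx

lemma RcoF_norm_le {N n : ℕ} (E : Set (Mat N n)) (R : ℝ) (h : ∀ x ∈ E, ‖x‖ ≤ R) :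
    ∀ x ∈ RcoF E, ‖x‖ ≤ R := by
  intro x hx
  have := hx _ (rankOneConvex_norm R) (fun η hη => by simpa using h η hη)
  simpa using this

/-- separating function -/
lemma exists_sep {N n : ℕ} (E U : Set (Mat N n)) (hU : IsOpen U) (R : ℝ) (hR : ∀ x ∈ E, ‖x‖ ≤ R)
    (hEU : RcoF E ⊆ U) : ∃ g : Mat N n → ℝ, RankOneConvexFun g ∧ (∀ x ∈ E, g x ≤ 0) ∧
      ∀ x, g x < 1 → x ∈ U := by
  have hcomp : IsCompact (Metric.closedBall (0 : Mat N n) (R + 1) \ U) :=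
    (isCompact_closedBall _ _).diff hU
  have hpt : ∀ ξ : Mat N n, ξ ∉ U → ∃ f : Mat N n → ℝ, ∃ r > 0, RankOneConvexFun f ∧
      (∀ x ∈ E, f x ≤ 0) ∧ ∀ η ∈ Metric.ball ξ r, 1 < f η := by
    intro ξ hξ
    have : ξ ∉ RcoF E := fun h => hξ (hEU h)
    simp only [RcoF, Set.mem_ofPred_eq, not_forall, not_le] at this
    obtain ⟨f, hf, hfE, hfξ⟩ := this
    have h2 := rankOneConvex_const_mul hf (2 / f ξ) 0 (by positivity)
    obtain ⟨r, hr, h3⟩ := h2.lower ξ 1 (by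
      have : 2 / f ξ * f ξ = 2 := by field_simp
      simp only [this]; norm_num)
    refine ⟨_, r, hr, h2, fun x hx => ?_, h3⟩
    have := mul_nonneg_of_nonpos_of_nonpos (hfE x hx) (neg_nonpos.2 (show 0 ≤ 2 / f ξ by positivity))
    linarith
  choose! f r hr hfc hfE hf1 using hpt
  obtain ⟨T, hT, hcov⟩ := hcomp.elim_nhds_subcover (fun ξ => Metric.ball ξ (r ξ))
    (fun x hx => Metric.ball_mem_nhds _ (hr x hx.2))
  have hfin : ∀ T : Finset (Mat N n), (∀ x ∈ T, x ∉ U) → ∃ g : Mat N n → ℝ, RankOneConvexFun g ∧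
      (∀ x ∈ E, g x ≤ 0) ∧ (∀ x, ‖x‖ - R ≤ g x) ∧ ∀ x ∈ T, ∀ y, f x y ≤ g y := by
    intro T
    induction T using Finset.induction_on with
    | empty =>
      intro _
      exact ⟨_, rankOneConvex_norm R, fun x hx => by simpa using hR x hx, fun x => le_rfl,
        by simp⟩
    | insert a T ha ih =>
      intro h
      obtain ⟨g, h1, h2, h3, h4⟩ := ih (fun x hx => h x (by simp [hx]))
      have haU := h a (by simp)
      refine ⟨_, rankOneConvex_max h1 (hfc a haU), fun x hx => max_le (h2 x hx) (hfE a haU x hx),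
        fun x => (h3 x).trans (le_max_left _ _), fun x hx y => ?_⟩
      rcases Finset.mem_insert.1 hx with rfl | hx
      · exact le_max_right _ _
      · exact (h4 x hx y).trans (le_max_left _ _)
  obtain ⟨g, h1, h2, h3, h4⟩ := hfin T (fun x hx => (hT x hx).2)
  refine ⟨g, h1, h2, fun x hx => ?_⟩
  by_contra hxU
  by_cases hn : ‖x‖ ≤ R + 1
  · have := hcov ⟨by simpa using hn, hxU⟩
    simp only [Set.mem_iUnion] at this
    obtain ⟨y, hy, hxy⟩ := this
    have h5 := hf1 y (hT y hy).2 x hxy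
    linarith [h4 y hy x]
  · linarith [h3 x, not_le.1 hn]

end Part1

section Part2
open Set

lemma rankOneConvex_glue {N n : ℕ} {U : Set (Mat N n)} {g T : Mat N n → ℝ} {D : ℝ} (hD : 0 < D)
    (hg : RankOneConvexFun g) (hgU : ∀ x, g x < 1 → x ∈ U) (hTD : ∀ x ∈ U, T x ≤ D)
    (hT : ∀ A ∈ U, ∀ B ∈ U, (A - B).rank = 1 → ∀ l ∈ Icc (0:ℝ) 1, l • A + (1 - l) • B ∈ U →
      T (l • A + (1 - l) • B) ≤ l * T A + (1 - l) * T B) :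
    RankOneConvexFun
      (fun x => if g x < 1 then max (T x) (3 * D * g x + -D) else 3 * D * g x + -D) := by
  have hq : RankOneConvexFun (fun x => 3 * D * g x + -D) :=
    rankOneConvex_const_mul hg (3 * D) (-D) (by positivity)
  set q : Mat N n → ℝ := fun x => 3 * D * g x + -D with hqdef
  set F : Mat N n → ℝ := fun x => if g x < 1 then max (T x) (q x) else q x with hF
  have hqF : ∀ x, q x ≤ F x := by
    intro x; simp only [hF]; split_ifs
    · exact le_max_right _ _
    · exact le_rfl
  have hTF : ∀ x, g x < 1 → T x ≤ F x := by
    intro x hx; simp only [hF, if_pos hx]; exact le_max_left _ _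
  have hFq : ∀ x, 2 / 3 ≤ g x → F x = q x := by
    intro x hx; simp only [hF]; split_ifs with h
    · apply max_eq_right
      refine (hTD x (hgU x h)).trans ?_
      simp only [hqdef]; nlinarith
    · rfl
  intro l hl A B hAB
  set ξ := l • A + (1 - l) • B with hξ
  have hl0 := hl.1
  have hl1 : 0 ≤ 1 - l := sub_nonneg.2 hl.2
  change F ξ ≤ l * F A + (1 - l) * F B
  have hqcase : F ξ = q ξ → F ξ ≤ l * F A + (1 - l) * F B := by
    intro h
    rw [h]
    refine (hq l hl A B hAB).trans ?_
    gcongr <;> exact hqF _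
  by_cases hc : F ξ = q ξ
  · exact hqcase hc
  have hg23 : g ξ < 2 / 3 := by
    by_contra h; exact hc (hFq ξ (not_lt.1 h))
  have hg1 : g ξ < 1 := by linarith
  have hFT : F ξ = T ξ := by
    have : F ξ = max (T ξ) (q ξ) := by simp only [hF, if_pos hg1]
    rw [this] at hc ⊢
    rcases max_choice (T ξ) (q ξ) with h | h
    · exact h
    · exact absurd h hc
  rcases eq_or_lt_of_le hl0 with h0 | h0
  · have : ξ = B := by rw [hξ, ← h0]; simp
    rw [this, ← h0]; simp
  rcases eq_or_lt_of_le hl1 with h1 | h1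
  · have : l = 1 := by linarith
    have hx : ξ = A := by rw [hξ, this]; simp
    rw [hx, this]; simp
  have key : ∀ C : Mat N n, (C - ξ).rank = 1 → ∃ μ : ℝ, 0 < μ ∧ μ ≤ 1 ∧
      g (ξ + μ • (C - ξ)) < 1 ∧ F (ξ + μ • (C - ξ)) ≤ μ * F C + (1 - μ) * F ξ := by
    intro C hC
    by_cases hgC : g C < 1
    · refine ⟨1, one_pos, le_rfl, ?_, ?_⟩ <;> simp [hgC]
    · have hcv := hg.convexOn_line ξ (C - ξ) hC
      have hcont : ContinuousOn (fun r : ℝ => g (ξ + r • (C - ξ))) (Icc 0 1) :=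
        (hcv.continuousOn isOpen_univ).mono (subset_univ _)
      have := intermediate_value_Icc (zero_le_one (α := ℝ)) hcont
      have h56 : (5 / 6 : ℝ) ∈ Icc (g (ξ + (0:ℝ) • (C - ξ))) (g (ξ + (1:ℝ) • (C - ξ))) := by
        constructor
        · simp; linarith
        · simp; linarith
      obtain ⟨μ, hμ, hμg⟩ := this h56
      simp only at hμg
      refine ⟨μ, ?_, hμ.2, by rw [hμg]; norm_num, ?_⟩
      · rcases eq_or_lt_of_le hμ.1 with h | h
        · rw [← h] at hμg; simp at hμg; linarith
        · exact h
      · rw [hFq _ (by rw [hμg]; norm_num)]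
        have h2 := hq μ hμ C ξ hC
        have e : μ • C + (1 - μ) • ξ = ξ + μ • (C - ξ) := by module
        rw [e] at h2
        have hμ1 : 0 ≤ 1 - μ := sub_nonneg.2 hμ.2
        refine h2.trans ?_
        gcongr
        · exact hμ.1
        · exact hqF _
        · exact hqF _
  have eA : A - ξ = (1 - l) • (A - B) := by rw [hξ]; module
  have eB : B - ξ = (-l) • (A - B) := by rw [hξ]; module
  obtain ⟨μ, hμ0, hμ1, hμg, hμF⟩ := key A (by rw [eA, rank_smul_eq _ _ h1.ne', hAB])
  obtain ⟨ν, hν0, hν1, hνg, hνF⟩ := key B (by rw [eB, rank_smul_eq _ _ (by linarith), hAB])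
  set A' := ξ + μ • (A - ξ) with hA'
  set B' := ξ + ν • (B - ξ) with hB'
  set m := μ * (1 - l) + ν * l with hm
  have hmpos : 0 < m := by positivity
  set α := ν * l / m with hα
  have hα0 : 0 ≤ α := by positivity
  have hα1 : α ≤ 1 := by
    rw [hα, div_le_one hmpos, hm]
    have : 0 < μ * (1 - l) := by positivity
    linarith
  have hdiff : A' - B' = m • (A - B) := by
    rw [hA', hB', eA, eB, hm]; module
  have hcomb : α • A' + (1 - α) • B' = ξ := by
    have : α • A' + (1 - α) • B' = ξ + (α * m - ν * l) • (A - B) := by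
      rw [hA', hB', eA, eB, hm]; module
    rw [this, hα, div_mul_cancel₀ _ hmpos.ne']; simp
  have h3 := hT A' (hgU _ hμg) B' (hgU _ hνg) (by rw [hdiff, rank_smul_eq _ _ hmpos.ne', hAB]) α
    ⟨hα0, hα1⟩ (by rw [hcomb]; exact hgU _ hg1)
  rw [hcomb] at h3
  have h4 : F ξ ≤ α * F A' + (1 - α) * F B' := by
    rw [hFT]
    refine h3.trans ?_
    have := sub_nonneg.2 hα1
    gcongr
    · exact hTF _ hμg
    · exact hTF _ hνg
  have h5 : F ξ ≤ α * (μ * F A + (1 - μ) * F ξ) + (1 - α) * (ν * F B + (1 - ν) * F ξ) := by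
    refine h4.trans ?_
    have := sub_nonneg.2 hα1
    gcongr
  have hαm : α * m = ν * l := div_mul_cancel₀ _ hmpos.ne'
  have hαm' : (1 - α) * m = μ * (1 - l) := by rw [sub_mul, hαm, hm]; ring
  have h6 := mul_le_mul_of_nonneg_right h5 hmpos.le
  have e6 : (α * (μ * F A + (1 - μ) * F ξ) + (1 - α) * (ν * F B + (1 - ν) * F ξ)) * m
      = (α * m) * (μ * F A + (1 - μ) * F ξ) + ((1 - α) * m) * (ν * F B + (1 - ν) * F ξ) := by ring
  rw [e6, hαm, hαm', hm] at h6
  have h7 : (μ * ν) * F ξ ≤ (μ * ν) * (l * F A + (1 - l) * F B) := by linarith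
  exact le_of_mul_le_mul_left h7 (by positivity)

end Part2

section Part3
open Set

structure Adm {N n : ℕ} (U : Set (Mat N n)) (L : NNReal) (Ω : Set (Fin n → ℝ)) (ξ : Mat N n)
    (c : Fin N → ℝ) (u : (Fin n → ℝ) → Fin N → ℝ) (ι : Type) (P : ι → Set (Fin n → ℝ))
    (A : ι → Mat N n) (d : ι → Fin N → ℝ) : Prop where
  lip : LipschitzWith L u
  out : ∀ x ∉ Ω, u x = ξ.mulVec x + c
  opn : ∀ i, IsOpen (P i)
  sub : ∀ i, P i ⊆ Ω
  disj : ∀ i j, i ≠ j → Disjoint (P i) (P j)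
  null : volume (Ω \ ⋃ i, P i) = 0
  mem : ∀ i, A i ∈ U
  aff : ∀ i, ∀ x ∈ P i, u x = (A i).mulVec x + d i

def Ach {N n : ℕ} (U E : Set (Mat N n)) (L : NNReal) (ξ : Mat N n) (s : ℝ) : Prop :=
  ∀ Ω : Set (Fin n → ℝ), IsOpen Ω → Bornology.IsBounded Ω → ∀ c : Fin N → ℝ, ∀ ε > (0:ℝ),
    ∃ (u : (Fin n → ℝ) → Fin N → ℝ) (ι : Type) (P : ι → Set (Fin n → ℝ))
      (A : ι → Mat N n) (d : ι → Fin N → ℝ), Countable ι ∧ Adm U L Ω ξ c u ι P A d ∧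
      (∀ x, ‖u x - (ξ.mulVec x + c)‖ ≤ ε) ∧
      ∑' i, ENNReal.ofReal (Metric.infDist (A i) E) * volume (P i)
        ≤ ENNReal.ofReal s * volume Ω + ENNReal.ofReal ε

lemma exists_frontier_mem_segment {n : ℕ} {P : Set (Fin n → ℝ)} {x y : Fin n → ℝ}
    (hx : x ∈ P) (hy : y ∉ P) : ∃ z ∈ segment ℝ x y, z ∈ frontier P := by
  by_contra! h
  have hc : IsPreconnected (segment ℝ x y) := (convex_segment x y).isPreconnected
  have := hc (interior P) (closure P)ᶜ isOpen_interior isClosed_closure.isOpen_compl (by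
    intro z hz
    by_cases hzi : z ∈ interior P
    · exact Or.inl hzi
    · right
      intro hzc
      exact h z hz ⟨hzc, hzi⟩) ⟨x, left_mem_segment ℝ x y, by
        by_contra hxi
        exact h x (left_mem_segment ℝ x y) ⟨subset_closure hx, hxi⟩⟩
    ⟨y, right_mem_segment ℝ x y, fun hyc =>
      h y (right_mem_segment ℝ x y) ⟨hyc, fun hyi => hy (interior_subset hyi)⟩⟩
  obtain ⟨z, _, hz1, hz2⟩ := this
  exact hz2 (subset_closure (interior_subset hz1))

lemma lip_glue {n N : ℕ} {L : NNReal} {ι : Type} {P : ι → Set (Fin n → ℝ)}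
    {u₀ u : (Fin n → ℝ) → Fin N → ℝ} {v : ι → (Fin n → ℝ) → Fin N → ℝ}
    (hP : ∀ i, IsOpen (P i)) (hd : ∀ i j, i ≠ j → Disjoint (P i) (P j))
    (h0 : LipschitzWith L u₀) (hv : ∀ i, LipschitzWith L (v i))
    (hfr : ∀ i, ∀ x ∈ frontier (P i), v i x = u₀ x)
    (hin : ∀ i, ∀ x ∈ P i, u x = v i x) (hout : ∀ x, (∀ i, x ∉ P i) → u x = u₀ x) :
    LipschitzWith L u := by
  have hfrout : ∀ i, ∀ z ∈ frontier (P i), ∀ j, z ∉ P j := by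
    intro i z hz j hzj
    by_cases hij : i = j
    · subst hij
      rw [(hP i).frontier_eq] at hz
      exact hz.2 hzj
    · have := (hd i j hij).closure_left (hP j)
      exact this.le_bot ⟨hz.1, hzj⟩
  have hout2 : ∀ x y, (∀ i, x ∉ P i) → (∀ i, y ∉ P i) → dist (u x) (u y) ≤ L * dist x y := by
    intro x y hx hy
    rw [hout x hx, hout y hy]; exact h0.dist_le_mul x y
  have hmix : ∀ x y, (∀ i, y ∉ P i) → dist (u x) (u y) ≤ L * dist x y := by
    intro x y hy
    by_cases hx : ∀ i, x ∉ P i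
    · exact hout2 x y hx hy
    · push Not at hx
      obtain ⟨i, hi⟩ := hx
      obtain ⟨z, hz, hzf⟩ := exists_frontier_mem_segment hi (hy i)
      have hzo := hfrout i z hzf
      have e1 : dist (u x) (u z) ≤ L * dist x z := by
        rw [hin i x hi, hout z hzo, ← hfr i z hzf]; exact (hv i).dist_le_mul x z
      have e2 := hout2 z y hzo hy
      have e3 := dist_add_dist_of_mem_segment hz
      calc dist (u x) (u y) ≤ dist (u x) (u z) + dist (u z) (u y) := dist_triangle _ _ _
        _ ≤ L * dist x z + L * dist z y := add_le_add e1 e2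
        _ = L * dist x y := by rw [← mul_add, e3]
  refine LipschitzWith.of_dist_le_mul fun x y => ?_
  by_cases hy : ∀ i, y ∉ P i
  · exact hmix x y hy
  · push Not at hy
    obtain ⟨j, hj⟩ := hy
    by_cases hxj : x ∈ P j
    · rw [hin j x hxj, hin j y hj]; exact (hv j).dist_le_mul x y
    · obtain ⟨z, hz, hzf⟩ := exists_frontier_mem_segment hj hxj
      have hzo := hfrout j z hzf
      have e1 := hmix x z hzo
      have e2 := hmix y z hzo
      have e3 := dist_add_dist_of_mem_segment hz
      calc dist (u x) (u y) ≤ dist (u x) (u z) + dist (u z) (u y) := dist_triangle _ _ _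
        _ ≤ L * dist x z + L * dist z y := add_le_add e1 (by rw [dist_comm, dist_comm z y]; exact e2)
        _ = L * dist x y := by
          rw [← mul_add, ← dist_comm y x, ← e3, dist_comm x z, dist_comm z y, add_comm]

lemma Adm.glue {N n : ℕ} {U : Set (Mat N n)} {L : NNReal} {Ω : Set (Fin n → ℝ)} {ξ : Mat N n}
    {c : Fin N → ℝ} {u₀ : (Fin n → ℝ) → Fin N → ℝ} {ι : Type} [Countable ι]
    {P : ι → Set (Fin n → ℝ)} {A : ι → Mat N n} {d : ι → Fin N → ℝ}
    (h0 : Adm U L Ω ξ c u₀ ι P A d)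
    {v : ι → (Fin n → ℝ) → Fin N → ℝ} {J : ι → Type} {Q : ∀ i, J i → Set (Fin n → ℝ)}
    {A' : ∀ i, J i → Mat N n} {d' : ∀ i, J i → Fin N → ℝ}
    (hv : ∀ i, Adm U L (P i) (A i) (d i) (v i) (J i) (Q i) (A' i) (d' i)) :
    ∃ u, Adm U L Ω ξ c u (Σ i, J i) (fun p => Q p.1 p.2) (fun p => A' p.1 p.2)
      (fun p => d' p.1 p.2) ∧ ∀ x, u x = u₀ x ∨ ∃ i, x ∈ P i ∧ u x = v i x := by
  let u : (Fin n → ℝ) → Fin N → ℝ := fun x => if h : ∃ i, x ∈ P i then v h.choose x else u₀ x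
  have hin : ∀ i, ∀ x ∈ P i, u x = v i x := by
    intro i x hx
    have h : ∃ i, x ∈ P i := ⟨i, hx⟩
    have : h.choose = i := by
      by_contra hne
      exact (h0.disj _ _ hne).le_bot ⟨h.choose_spec, hx⟩
    simp only [u, dif_pos h, this]
  have hout : ∀ x, (∀ i, x ∉ P i) → u x = u₀ x := by
    intro x hx
    have h : ¬ ∃ i, x ∈ P i := by push Not; exact hx
    simp only [u, dif_neg h]
  refine ⟨u, ⟨?_, ?_, ?_, ?_, ?_, ?_, ?_, ?_⟩, ?_⟩
  · refine lip_glue h0.opn h0.disj h0.lip (fun i => (hv i).lip) ?_ hin hout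
    intro i x hx
    rw [(h0.opn i).frontier_eq] at hx
    rw [(hv i).out x hx.2]
    have hcl : closure (P i) ⊆ {x | (A i).mulVec x + d i = u₀ x} := by
      apply closure_minimal
      · intro y hy; exact (h0.aff i y hy).symm
      · apply isClosed_eq _ h0.lip.continuous
        exact (Continuous.matrix_mulVec continuous_const continuous_id).add continuous_const
    exact hcl hx.1
  · intro x hx
    rw [hout x (fun i hi => hx (h0.sub i hi)), h0.out x hx]
  · intro p; exact (hv p.1).opn p.2
  · intro p; exact ((hv p.1).sub p.2).trans (h0.sub p.1)
  · rintro ⟨i, j⟩ ⟨i', j'⟩ hne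
    by_cases hi : i = i'
    · subst hi
      exact (hv i).disj j j' (fun h => hne (by rw [h]))
    · exact (h0.disj i i' hi).mono ((hv i).sub j) ((hv i').sub j')
  · have : Ω \ ⋃ p : (Σ i, J i), Q p.1 p.2 ⊆ (Ω \ ⋃ i, P i) ∪ ⋃ i, (P i \ ⋃ j, Q i j) := by
      rintro x ⟨hx, hxn⟩
      by_cases h : x ∈ ⋃ i, P i
      · right
        obtain ⟨i, hi⟩ := mem_iUnion.1 h
        refine mem_iUnion.2 ⟨i, hi, fun hj => hxn ?_⟩
        obtain ⟨j, hj⟩ := mem_iUnion.1 hj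
        exact mem_iUnion.2 ⟨⟨i, j⟩, hj⟩
      · exact Or.inl ⟨hx, h⟩
    refine measure_mono_null this (measure_union_null h0.null ?_)
    exact measure_iUnion_null fun i => (hv i).null
  · intro p; exact (hv p.1).mem p.2
  · intro p x hx
    rw [hin p.1 x ((hv p.1).sub p.2 hx)]
    exact (hv p.1).aff p.2 x hx
  · intro x
    by_cases h : ∃ i, x ∈ P i
    · obtain ⟨i, hi⟩ := h
      exact Or.inr ⟨i, hi, hin i x hi⟩
    · left; apply hout; push Not at h; exact h

lemma ach_trivial {N n : ℕ} {U E : Set (Mat N n)} {L : NNReal}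
    (hL : ∀ A ∈ U, LipschitzWith L (fun x => A.mulVec x)) {ξ : Mat N n} (hξ : ξ ∈ U) :
    Ach U E L ξ (Metric.infDist ξ E) := by
  intro Ω hΩ _ c ε hε
  refine ⟨fun x => ξ.mulVec x + c, Unit, fun _ => Ω, fun _ => ξ, fun _ => c, inferInstance,
    ⟨?_, ?_, ?_, ?_, ?_, ?_, ?_, ?_⟩, ?_, ?_⟩
  · refine LipschitzWith.of_dist_le_mul fun x y => ?_
    simpa using (hL ξ hξ).dist_le_mul x y
  · simp
  · exact fun _ => hΩ
  · simp
  · intro i j h; exact absurd rfl h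
  · rw [Set.iUnion_const, Set.sdiff_self]; exact measure_empty
  · exact fun _ => hξ
  · simp
  · simp [hε.le]
  · simp

lemma Ach.mono {N n : ℕ} {U E : Set (Mat N n)} {L : NNReal} {ξ : Mat N n} {s t : ℝ}
    (h : Ach U E L ξ s) (hst : s ≤ t) : Ach U E L ξ t := by
  intro Ω hΩ hb c ε hε
  obtain ⟨u, ι, P, A, d, h1, h2, h3, h4⟩ := h Ω hΩ hb c ε hε
  refine ⟨u, ι, P, A, d, h1, h2, h3, h4.trans ?_⟩
  gcongr

/-- achievability is closed from above -/
lemma Ach.of_forall {N n : ℕ} {U E : Set (Mat N n)} {L : NNReal} {ξ : Mat N n} {s : ℝ} (hs : 0 ≤ s)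
    (h : ∀ t > s, Ach U E L ξ t) : Ach U E L ξ s := by
  intro Ω hΩ hb c ε hε
  have hfin : volume Ω ≠ ⊤ := hb.measure_lt_top.ne
  set V := (volume Ω).toReal with hV
  have hV0 : 0 ≤ V := ENNReal.toReal_nonneg
  obtain ⟨u, ι, P, A, d, h1, h2, h3, h4⟩ :=
    h (s + ε / (2 * (V + 1))) (by simp only [gt_iff_lt, lt_add_iff_pos_right]; positivity)
      Ω hΩ hb c (ε / 2) (by positivity)
  refine ⟨u, ι, P, A, d, h1, h2, fun x => (h3 x).trans (by linarith), h4.trans ?_⟩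
  have hVe : volume Ω = ENNReal.ofReal V := (ENNReal.ofReal_toReal hfin).symm
  rw [hVe, ← ENNReal.ofReal_mul (by positivity), ← ENNReal.ofReal_mul hs,
    ← ENNReal.ofReal_add (by positivity) (by positivity),
    ← ENNReal.ofReal_add (by positivity) (by positivity)]
  apply ENNReal.ofReal_le_ofReal
  have : ε / (2 * (V + 1)) * V ≤ ε / 2 := by
    rw [div_mul_eq_mul_div, div_le_div_iff₀ (by positivity) (by positivity)]
    nlinarith
  linarith

/-- substituting achievable maps in the pieces -/
lemma ach_subst {N n : ℕ} {U E : Set (Mat N n)} {L : NNReal} {Ω : Set (Fin n → ℝ)} {ξ : Mat N n}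
    {c : Fin N → ℝ} {u₀ : (Fin n → ℝ) → Fin N → ℝ} {ι : Type} [Countable ι]
    {P : ι → Set (Fin n → ℝ)} {A : ι → Mat N n} {d : ι → Fin N → ℝ}
    (h0 : Adm U L Ω ξ c u₀ ι P A d) (hb : Bornology.IsBounded Ω) {ε : ℝ} (hε : 0 < ε)
    (hsup : ∀ x, ‖u₀ x - (ξ.mulVec x + c)‖ ≤ ε / 2) (κ : ι → ℝ) (hκ : ∀ i, Ach U E L (A i) (κ i))
    {W : ENNReal} (hW : ∑' i, ENNReal.ofReal (κ i) * volume (P i) ≤ W + ENNReal.ofReal (ε / 2)) :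
    ∃ (u : (Fin n → ℝ) → Fin N → ℝ) (ι : Type) (P : ι → Set (Fin n → ℝ))
      (A : ι → Mat N n) (d : ι → Fin N → ℝ), Countable ι ∧ Adm U L Ω ξ c u ι P A d ∧
      (∀ x, ‖u x - (ξ.mulVec x + c)‖ ≤ ε) ∧
      ∑' i, ENNReal.ofReal (Metric.infDist (A i) E) * volume (P i) ≤ W + ENNReal.ofReal ε := by
  obtain ⟨ε', hε'0, hε's⟩ := ENNReal.exists_pos_sum_of_countable
    (ε := ENNReal.ofReal (ε / 2)) (by simpa using hε) ι
  have hex := fun i => hκ i (P i) (h0.opn i) (hb.subset (h0.sub i)) (d i) (min (ε' i) (ε / 2))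
    (lt_min (by exact_mod_cast hε'0 i) (by positivity))
  choose v J Q A' d' hJ hv hvs hvc using hex
  obtain ⟨u, hu, hux⟩ := h0.glue hv
  refine ⟨u, _, _, _, _, inferInstance, hu, ?_, ?_⟩
  · intro x
    rcases hux x with h | ⟨i, hi, h⟩
    · rw [h]; exact (hsup x).trans (by linarith)
    · rw [h]
      have e1 := (hvs i x).trans (min_le_right _ _)
      rw [← h0.aff i x hi] at e1
      calc ‖v i x - (ξ.mulVec x + c)‖ = ‖(v i x - u₀ x) + (u₀ x - (ξ.mulVec x + c))‖ := by
            congr 1; abel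
        _ ≤ ‖v i x - u₀ x‖ + ‖u₀ x - (ξ.mulVec x + c)‖ := norm_add_le _ _
        _ ≤ ε / 2 + ε / 2 := add_le_add e1 (hsup x)
        _ = ε := by ring
  · rw [ENNReal.tsum_sigma']
    calc ∑' i, ∑' j, ENNReal.ofReal (Metric.infDist (A' i j) E) * volume (Q i j)
        ≤ ∑' i, (ENNReal.ofReal (κ i) * volume (P i) + ε' i) := by
          apply ENNReal.tsum_le_tsum
          intro i
          refine (hvc i).trans ?_
          gcongr
          rw [← ENNReal.ofReal_coe_nnreal]
          exact ENNReal.ofReal_le_ofReal (min_le_left _ _)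
      _ = ∑' i, ENNReal.ofReal (κ i) * volume (P i) + ∑' i, (ε' i : ENNReal) := ENNReal.tsum_add
      _ ≤ W + ENNReal.ofReal (ε / 2) + ENNReal.ofReal (ε / 2) := add_le_add hW hε's.le
      _ = W + ENNReal.ofReal ε := by
          rw [add_assoc, ← ENNReal.ofReal_add (by positivity) (by positivity)]; congr 2; ring

end Part3

section Part4
open Set

noncomputable def saw (l t : ℝ) : ℝ := min ((1 - l) * Int.fract t) (l * (1 - Int.fract t))

lemma saw_nonneg {l : ℝ} (h0 : 0 ≤ l) (h1 : l ≤ 1) (t : ℝ) : 0 ≤ saw l t := by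
  have := Int.fract_nonneg t
  have := (Int.fract_lt_one t).le
  exact le_min (mul_nonneg (by linarith) (by linarith)) (mul_nonneg h0 (by linarith))

lemma saw_le_one {l : ℝ} (h0 : 0 ≤ l) (t : ℝ) : saw l t ≤ 1 := by
  have := Int.fract_nonneg t
  have := (Int.fract_lt_one t).le
  refine (min_le_left _ _).trans ?_
  nlinarith

lemma saw_of_le {l t : ℝ} (h : Int.fract t ≤ l) : saw l t = (1 - l) * (t - ⌊t⌋) := by
  rw [saw, min_eq_left (by linarith)]; rfl

lemma saw_of_gt {l t : ℝ} (h : l < Int.fract t) : saw l t = l * (⌊t⌋ + 1 - t) := by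
  rw [saw, min_eq_right (by linarith), Int.fract]; ring

lemma saw_lip {l : ℝ} (h0 : 0 ≤ l) (h1 : l ≤ 1) (s t : ℝ) : |saw l s - saw l t| ≤ |s - t| := by
  wlog hst : s ≤ t generalizing s t
  · rw [abs_sub_comm, abs_sub_comm s t]; exact this t s (not_le.1 hst).le
  rw [abs_of_nonpos (sub_nonpos.2 hst : s - t ≤ 0)]
  by_cases hf : ⌊s⌋ = ⌊t⌋
  · refine (abs_min_sub_min_le_max _ _ _ _).trans ?_
    have e1 : (1 - l) * Int.fract s - (1 - l) * Int.fract t = (1 - l) * (s - t) := by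
      simp only [Int.fract, hf]; ring
    have e2 : l * (1 - Int.fract s) - l * (1 - Int.fract t) = l * (t - s) := by
      simp only [Int.fract, hf]; ring
    rw [e1, e2, abs_mul, abs_mul, abs_of_nonneg h0, abs_of_nonneg (sub_nonneg.2 h1),
      abs_of_nonpos (sub_nonpos.2 hst), abs_of_nonneg (sub_nonneg.2 hst)]
    apply max_le <;> nlinarith
  · have hlt : ⌊s⌋ + 1 ≤ ⌊t⌋ := by
      have := Int.floor_le_floor hst
      omega
    have hlt' : (⌊s⌋ : ℝ) + 1 ≤ ⌊t⌋ := by exact_mod_cast hlt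
    have a1 : saw l s ≤ t - s := by
      refine (min_le_right _ _).trans ?_
      have := Int.floor_le t
      simp only [Int.fract]
      nlinarith [Int.lt_floor_add_one s]
    have a2 : saw l t ≤ t - s := by
      refine (min_le_left _ _).trans ?_
      have := Int.floor_le t
      simp only [Int.fract]
      nlinarith [Int.lt_floor_add_one s]
    have b1 := saw_nonneg h0 h1 s
    have b2 := saw_nonneg h0 h1 t
    rw [abs_le]; constructor <;> linarith

lemma fract_average {l s t : ℝ} (h0 : 0 ≤ l) (h1 : l ≤ 1) (hs : 0 ≤ s) (ht : 0 ≤ t) (y : ℝ) :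
    ∫⁻ τ in Ioc (0:ℝ) 1, ENNReal.ofReal (if Int.fract (y + τ) ≤ l then s else t)
      ≤ ENNReal.ofReal (l * s + (1 - l) * t) := by
  set f : ℝ → ENNReal := fun τ => ENNReal.ofReal (if Int.fract τ ≤ l then s else t) with hf
  have e1 : ∫⁻ τ in Ioc (0:ℝ) 1, f (y + τ) = ∫⁻ τ in Ioc y (y + 1), f τ := by
    have := (measurePreserving_add_left (volume : Measure ℝ) y).setLIntegral_comp_preimage_emb
      (measurableEmbedding_addLeft y) f (Ioc y (y + 1))
    rw [← this]
    congr 2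
    ext z; simp
  have e2 : ∫⁻ τ in Ioc y (y + 1), f τ = ∫⁻ τ in Ioc (0:ℝ) (0 + 1), f τ := by
    have hp : Function.Periodic f 1 := by
      intro z; simp only [hf, Int.fract_add_one]
    exact (isAddFundamentalDomain_Ioc one_pos y).setLIntegral_eq
      (isAddFundamentalDomain_Ioc one_pos 0) f hp.map_vadd_zmultiples
  change ∫⁻ τ in Ioc (0:ℝ) 1, f (y + τ) ≤ _
  rw [e1, e2, zero_add, ← setLIntegral_congr (Ioo_ae_eq_Ioc (μ := volume) (a := (0:ℝ)) (b := 1))]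
  have hfr : ∀ z ∈ Ioo (0:ℝ) 1, Int.fract z = z := fun z hz =>
    Int.fract_eq_self.2 ⟨hz.1.le, hz.2⟩
  have hsub : Ioo (0:ℝ) 1 ⊆ (Ioo 0 1 ∩ Iic l) ∪ (Ioo 0 1 ∩ Ioi l) := by
    intro z hz
    rcases le_or_gt z l with h | h
    · exact Or.inl ⟨hz, h⟩
    · exact Or.inr ⟨hz, h⟩
  calc ∫⁻ τ in Ioo (0:ℝ) 1, f τ ≤ ∫⁻ τ in (Ioo 0 1 ∩ Iic l) ∪ (Ioo 0 1 ∩ Ioi l), f τ :=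
        lintegral_mono_set hsub
    _ ≤ (∫⁻ τ in Ioo 0 1 ∩ Iic l, f τ) + (∫⁻ τ in Ioo 0 1 ∩ Ioi l, f τ) := lintegral_union_le _ _ _
    _ = (∫⁻ _ in Ioo 0 1 ∩ Iic l, ENNReal.ofReal s) +
          (∫⁻ _ in Ioo 0 1 ∩ Ioi l, ENNReal.ofReal t) := by
        congr 1
        · apply setLIntegral_congr_fun (measurableSet_Ioo.inter measurableSet_Iic)
          intro z hz
          simp only [hf, hfr z hz.1]
          rw [if_pos (show z ≤ l from hz.2)]
        · apply setLIntegral_congr_fun (measurableSet_Ioo.inter measurableSet_Ioi)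
          intro z hz
          simp only [hf, hfr z hz.1]
          rw [if_neg (not_le.2 (show l < z from hz.2))]
    _ ≤ ENNReal.ofReal s * ENNReal.ofReal l + ENNReal.ofReal t * ENNReal.ofReal (1 - l) := by
        rw [setLIntegral_const, setLIntegral_const]
        gcongr
        · calc volume (Ioo 0 1 ∩ Iic l) ≤ volume (Icc 0 l) :=
                measure_mono fun z hz => ⟨hz.1.1.le, hz.2⟩
            _ = ENNReal.ofReal l := by simp
        · calc volume (Ioo 0 1 ∩ Ioi l) ≤ volume (Icc l 1) :=
                measure_mono fun z hz => ⟨le_of_lt hz.2, hz.1.2.le⟩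
            _ = ENNReal.ofReal (1 - l) := by simp
    _ = _ := by
        rw [← ENNReal.ofReal_mul hs, ← ENNReal.ofReal_mul ht, ← ENNReal.ofReal_add]
        · congr 1; ring
        · positivity
        · exact mul_nonneg ht (by linarith)

lemma exists_phase {n : ℕ} {l s t : ℝ} (h0 : 0 ≤ l) (h1 : l ≤ 1) (hs : 0 ≤ s) (ht : 0 ≤ t)
    (y : (Fin n → ℝ) → ℝ) (hy : Measurable y) (Ω : Set (Fin n → ℝ)) :
    ∃ τ : ℝ, ∫⁻ x in Ω, ENNReal.ofReal (if Int.fract (y x + τ) ≤ l then s else t)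
      ≤ ENNReal.ofReal (l * s + (1 - l) * t) * volume Ω := by
  have hm : Measurable (fun p : ℝ × (Fin n → ℝ) =>
      ENNReal.ofReal (if Int.fract (y p.2 + p.1) ≤ l then s else t)) := by
    apply ENNReal.measurable_ofReal.comp
    apply Measurable.ite _ measurable_const measurable_const
    have : Measurable (fun p : ℝ × (Fin n → ℝ) => Int.fract (y p.2 + p.1)) :=
      measurable_fract.comp ((hy.comp measurable_snd).add measurable_fst)
    exact this measurableSet_Iic
  have : IsProbabilityMeasure (volume.restrict (Ioc (0:ℝ) 1)) := ⟨by simp⟩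
  obtain ⟨τ, hτ⟩ := exists_le_lintegral (μ := volume.restrict (Ioc (0:ℝ) 1))
    (f := fun τ => ∫⁻ x in Ω, ENNReal.ofReal (if Int.fract (y x + τ) ≤ l then s else t))
    (Measurable.lintegral_prod_right hm).aemeasurable
  refine ⟨τ, hτ.trans ?_⟩
  rw [lintegral_lintegral_swap hm.aemeasurable]
  calc _ ≤ ∫⁻ x in Ω, ENNReal.ofReal (l * s + (1 - l) * t) :=
        lintegral_mono fun x => fract_average h0 h1 hs ht (y x)
    _ = _ := by rw [setLIntegral_const]

lemma null_eq_affine {n : ℕ} (p q : (Fin n → ℝ) × ℝ) (h : p ≠ q) :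
    volume {x : Fin n → ℝ | p.1 ⬝ᵥ x + p.2 = q.1 ⬝ᵥ x + q.2} = 0 := by
  by_cases hv : p.1 = q.1
  · have : {x : Fin n → ℝ | p.1 ⬝ᵥ x + p.2 = q.1 ⬝ᵥ x + q.2} = ∅ := by
      ext x
      simp only [mem_ofPred_eq, hv, mem_empty_iff_false, iff_false]
      intro h2
      exact h (Prod.ext hv (by linarith))
    rw [this]; exact measure_empty
  · let S : AffineSubspace ℝ (Fin n → ℝ) :=
      { carrier := {x : Fin n → ℝ | p.1 ⬝ᵥ x + p.2 = q.1 ⬝ᵥ x + q.2}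
        smul_vsub_vadd_mem' := by
          intro c x y z hx hy hz
          simp only [mem_ofPred_eq, vsub_eq_sub, vadd_eq_add, dotProduct_add, dotProduct_smul,
            dotProduct_sub, smul_eq_mul] at *
          linear_combination c * hx - c * hy + hz }
    have hS : S ≠ ⊤ := by
      intro hS
      apply hv
      have hall : ∀ x : Fin n → ℝ, p.1 ⬝ᵥ x + p.2 = q.1 ⬝ᵥ x + q.2 := by
        intro x
        have : x ∈ S := by rw [hS]; trivial
        exact this
      have hz := hall 0
      simp at hz
      ext i
      have := hall (Pi.single i 1)
      simp at this
      linarith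
    exact Measure.addHaar_affineSubspace volume S hS

lemma exists_zeta {n : ℕ} {Ω : Set (Fin n → ℝ)} (hΩ : IsOpen Ω) (hb : Bornology.IsBounded Ω)
    {ε : ENNReal} (hε : ε ≠ 0) : ∃ ζ : (Fin n → ℝ) → ℝ, (∀ x y, |ζ x - ζ y| ≤ ‖x - y‖) ∧
      (∀ x, 0 ≤ ζ x) ∧ (∀ x ∉ Ω, ζ x = 0) ∧
      (∃ Z : Finset ((Fin n → ℝ) × ℝ), (∀ p ∈ Z, ‖p.1‖ ≤ 1) ∧
        ∀ x, ∃ p ∈ Z, ζ x = p.1 ⬝ᵥ x + p.2) ∧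
      ∃ m > 0, volume (Ω ∩ {x | ζ x < m}) ≤ ε := by
  obtain ⟨K, hKΩ, hK, hKε⟩ := hΩ.measurableSet.exists_isCompact_sdiff_lt
    (hb.measure_lt_top (μ := volume)).ne hε
  have hr : ∀ x ∈ Ω, ∃ r > 0, Metric.ball x r ⊆ Ω := Metric.isOpen_iff.1 hΩ
  choose! r hr0 hrs using hr
  obtain ⟨T, hT, hcov⟩ := hK.elim_nhds_subcover (fun x => Metric.ball x (r x))
    (fun x hx => Metric.ball_mem_nhds _ (hr0 x (hKΩ hx)))
  have hfin : ∀ T : Finset (Fin n → ℝ), (∀ x ∈ T, x ∈ Ω) →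
      ∃ ζ : (Fin n → ℝ) → ℝ, (∀ x y, |ζ x - ζ y| ≤ ‖x - y‖) ∧
      (∀ x, 0 ≤ ζ x) ∧ (∀ x ∉ Ω, ζ x = 0) ∧
      (∃ Z : Finset ((Fin n → ℝ) × ℝ), (∀ p ∈ Z, ‖p.1‖ ≤ 1) ∧
        ∀ x, ∃ p ∈ Z, ζ x = p.1 ⬝ᵥ x + p.2) ∧ ∀ y ∈ T, ∀ x ∈ Metric.ball y (r y), 0 < ζ x := by
    intro T
    induction T using Finset.induction_on with
    | empty =>
      intro _
      refine ⟨fun _ => 0, by simp, by simp, by simp, ⟨{(0, 0)}, by simp, by simp⟩, by simp⟩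
    | insert a T ha ih =>
      intro h
      obtain ⟨ζ, h1, h2, h3, ⟨Z, h4, h5⟩, h6⟩ := ih (fun x hx => h x (by simp [hx]))
      refine ⟨fun x => max (ζ x) (r a - ‖x - a‖), ?_, ?_, ?_, ?_, ?_⟩
      · intro x y
        refine (abs_max_sub_max_le_max _ _ _ _).trans (max_le (h1 x y) ?_)
        have e : r a - ‖x - a‖ - (r a - ‖y - a‖) = ‖y - a‖ - ‖x - a‖ := by ring
        rw [e]
        refine (abs_norm_sub_norm_le _ _).trans ?_
        rw [sub_sub_sub_cancel_right, norm_sub_rev]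
      · intro x; exact (h2 x).trans (le_max_left _ _)
      · intro x hx
        simp only
        rw [h3 x hx]
        apply max_eq_left
        by_contra hlt
        apply hx
        apply hrs a (h a (by simp))
        rw [Metric.mem_ball, dist_eq_norm]; linarith
      · refine ⟨Z ∪ ({(0, r a)} ∪
          (Finset.univ.image (fun i => (Pi.single i 1, r a - a i)) ∪
           Finset.univ.image (fun i => (Pi.single i (-1), r a + a i)))), ?_, ?_⟩
        · intro p hp
          simp only [Finset.mem_union, Finset.mem_singleton, Finset.mem_image, Finset.mem_univ,
            true_and] at hp
          rcases hp with hp | rfl | ⟨i, rfl⟩ | ⟨i, rfl⟩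
          · exact h4 p hp
          · simp
          · refine (pi_norm_le_iff_of_nonneg zero_le_one).2 fun j => ?_
            simp only [Pi.single_apply]; split_ifs <;> simp
          · refine (pi_norm_le_iff_of_nonneg zero_le_one).2 fun j => ?_
            simp only [Pi.single_apply]; split_ifs <;> simp
        · intro x
          simp only
          rcases max_choice (ζ x) (r a - ‖x - a‖) with hm | hm
          · rw [hm]
            obtain ⟨p, hp, hpx⟩ := h5 x
            exact ⟨p, by simp [hp], hpx⟩
          · rw [hm]
            rcases isEmpty_or_nonempty (Fin n) with he | hne
            · refine ⟨(0, r a), by simp, ?_⟩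
              have : x - a = 0 := Subsingleton.elim _ _
              rw [this]; simp
            · obtain ⟨i, hi⟩ : ∃ i, ‖x - a‖ = ‖(x - a) i‖ := by
                obtain ⟨i, -, hi⟩ := Finset.exists_max_image Finset.univ (fun i => ‖(x - a) i‖)
                  Finset.univ_nonempty
                refine ⟨i, le_antisymm ?_ (norm_le_pi_norm _ i)⟩
                exact (pi_norm_le_iff_of_nonneg (norm_nonneg _)).2 fun j => hi j (Finset.mem_univ j)
              rw [hi, Real.norm_eq_abs, Pi.sub_apply]
              rcases abs_choice (x i - a i) with habs | habs
              · refine ⟨(Pi.single i (-1), r a + a i), ?_, ?_⟩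
                · simp only [Finset.mem_union, Finset.mem_image, Finset.mem_univ, true_and]
                  exact Or.inr (Or.inr (Or.inr ⟨i, rfl⟩))
                · rw [habs]; simp; ring
              · refine ⟨(Pi.single i 1, r a - a i), ?_, ?_⟩
                · simp only [Finset.mem_union, Finset.mem_image, Finset.mem_univ, true_and]
                  exact Or.inr (Or.inr (Or.inl ⟨i, rfl⟩))
                · rw [habs]; simp; ring
      · intro y hy x hx
        rcases Finset.mem_insert.1 hy with rfl | hy
        · apply lt_max_of_lt_right
          rw [Metric.mem_ball, dist_eq_norm] at hx; linarith
        · exact lt_max_of_lt_left (h6 y hy x hx)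
  obtain ⟨ζ, h1, h2, h3, h4, h5⟩ := hfin T (fun x hx => hKΩ (hT x hx))
  refine ⟨ζ, h1, h2, h3, h4, ?_⟩
  have hcont : Continuous ζ := by
    have : LipschitzWith 1 ζ := LipschitzWith.of_dist_le_mul fun x y => by
      simpa [Real.dist_eq, dist_eq_norm] using h1 x y
    exact this.continuous
  have hpos : ∀ x ∈ K, 0 < ζ x := by
    intro x hx
    obtain ⟨y, hy, hxy⟩ := by simpa only [mem_iUnion] using hcov hx
    exact h5 y hy x hxy
  rcases K.eq_empty_or_nonempty with hKe | hKn
  · refine ⟨1, one_pos, (measure_mono inter_subset_left).trans ?_⟩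
    rw [hKe, sdiff_empty] at hKε
    exact hKε.le
  · obtain ⟨x0, hx0, hmin⟩ := hK.exists_isMinOn hKn hcont.continuousOn
    refine ⟨ζ x0, hpos x0 hx0, (measure_mono ?_).trans hKε.le⟩
    rintro x ⟨hx, hxm⟩
    exact ⟨hx, fun hxK => by
      have h7 : ζ x0 ≤ ζ x := hmin hxK
      have h8 : ζ x < ζ x0 := hxm
      linarith⟩

end Part4

section Part5
open Set

lemma vecMulVec_mulVec' {N n : ℕ} (a : Fin N → ℝ) (v z : Fin n → ℝ) :
    (Matrix.vecMulVec a v).mulVec z = (v ⬝ᵥ z) • a := by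
  ext i
  simp only [Matrix.mulVec, Matrix.vecMulVec_apply, dotProduct, Pi.smul_apply, smul_eq_mul,
    Finset.sum_mul]
  exact Finset.sum_congr rfl fun j _ => by ring

lemma adm_family {N n : ℕ} {U : Set (Mat N n)} {L : NNReal} {Ω : Set (Fin n → ℝ)} (hΩ : IsOpen Ω)
    {ξ : Mat N n} {c a : Fin N → ℝ} (F : Finset ((Fin n → ℝ) × ℝ)) (φ : (Fin n → ℝ) → ℝ)
    (hφc : Continuous φ) (hφ : ∀ x ∈ Ω, ∃ p ∈ F, φ x = p.1 ⬝ᵥ x + p.2) (hφ0 : ∀ x ∉ Ω, φ x = 0)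
    (hmem : ∀ p ∈ F, ξ + Matrix.vecMulVec a p.1 ∈ U)
    (hlip : LipschitzWith L (fun x => ξ.mulVec x + c + φ x • a)) :
    Adm U L Ω ξ c (fun x => ξ.mulVec x + c + φ x • a) (↥F)
      (fun p => Ω ∩ ⋂ q ∈ F.erase p.1, {x | φ x ≠ q.1 ⬝ᵥ x + q.2})
      (fun p => ξ + Matrix.vecMulVec a p.1.1) (fun p => c + p.1.2 • a) := by
  have huniq : ∀ p : ↥F, ∀ x ∈ Ω ∩ ⋂ q ∈ F.erase p.1, {x | φ x ≠ q.1 ⬝ᵥ x + q.2},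
      φ x = p.1.1 ⬝ᵥ x + p.1.2 := by
    rintro p x ⟨hx, hx2⟩
    obtain ⟨q, hq, hqx⟩ := hφ x hx
    by_cases h : q = p.1
    · rw [← h]; exact hqx
    · have := mem_iInter₂.1 hx2 q (Finset.mem_erase.2 ⟨h, hq⟩)
      exact absurd hqx this
  refine ⟨hlip, ?_, ?_, ?_, ?_, ?_, ?_, ?_⟩
  · intro x hx; simp [hφ0 x hx]
  · intro p
    refine hΩ.inter (isOpen_biInter_finset fun q _ => ?_)
    exact isOpen_ne_fun hφc (by fun_prop)
  · intro p; exact inter_subset_left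
  · intro p q hpq
    rw [Set.disjoint_left]
    intro x hxp hxq
    have h1 := huniq p x hxp
    exact mem_iInter₂.1 hxq.2 p.1 (Finset.mem_erase.2 ⟨fun h => hpq (Subtype.ext h), p.2⟩) h1
  · have hsub : Ω \ ⋃ p : ↥F, Ω ∩ ⋂ q ∈ F.erase p.1, {x | φ x ≠ q.1 ⬝ᵥ x + q.2} ⊆
        ⋃ p : ↥F, ⋃ q : ↥F, {x | p.1 ≠ q.1 ∧ p.1.1 ⬝ᵥ x + p.1.2 = q.1.1 ⬝ᵥ x + q.1.2} := by
      rintro x ⟨hx, hx2⟩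
      obtain ⟨p, hp, hpx⟩ := hφ x hx
      have h3 : ¬ (∀ q ∈ F.erase p, φ x ≠ q.1 ⬝ᵥ x + q.2) := by
        intro h3
        exact hx2 (mem_iUnion.2 ⟨⟨p, hp⟩, hx, mem_iInter₂.2 h3⟩)
      push Not at h3
      obtain ⟨q, hq, hqx⟩ := h3
      rw [Finset.mem_erase] at hq
      exact mem_iUnion.2 ⟨⟨p, hp⟩, mem_iUnion.2 ⟨⟨q, hq.2⟩, fun h => hq.1 h.symm,
        hpx.symm.trans hqx⟩⟩
    refine measure_mono_null hsub ?_
    refine measure_iUnion_null fun p => measure_iUnion_null fun q => ?_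
    by_cases h : p.1 = q.1
    · have : {x : Fin n → ℝ | p.1 ≠ q.1 ∧ p.1.1 ⬝ᵥ x + p.1.2 = q.1.1 ⬝ᵥ x + q.1.2} = ∅ := by
        ext x; simp [h]
      rw [this]; exact measure_empty
    · exact measure_mono_null (fun x hx => hx.2) (null_eq_affine p.1 q.1 h)
  · intro p; exact hmem p.1 p.2
  · intro p x hx
    rw [huniq p x hx, Matrix.add_mulVec, vecMulVec_mulVec', add_smul]
    abel

lemma exists_rho {N n : ℕ} {U : Set (Mat N n)} (hU : IsOpen U) {ξ : Mat N n} (hξ : ξ ∈ U)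
    (a : Fin N → ℝ) : ∃ ρ > 0, ρ * ‖a‖ ≤ 1 ∧
      ∀ w : Fin n → ℝ, ‖w‖ ≤ ρ → ξ + Matrix.vecMulVec a w ∈ U := by
  have hc : Continuous (fun w : Fin n → ℝ => ξ + Matrix.vecMulVec a w) := by
    refine continuous_const.add ?_
    let f : (Fin n → ℝ) →ₗ[ℝ] Mat N n :=
      { toFun := fun w => Matrix.vecMulVec a w
        map_add' := fun x y => by ext i j; simp [Matrix.vecMulVec_apply, mul_add]
        map_smul' := fun x y => by ext i j; simp [Matrix.vecMulVec_apply]; ring }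
    exact f.continuous_of_finiteDimensional
  have ho := hU.preimage hc
  have h0 : (0 : Fin n → ℝ) ∈ (fun w : Fin n → ℝ => ξ + Matrix.vecMulVec a w) ⁻¹' U := by
    have : Matrix.vecMulVec a (0 : Fin n → ℝ) = 0 := by ext i j; simp [Matrix.vecMulVec_apply]
    rw [mem_preimage, this, add_zero]; exact hξ
  obtain ⟨r, hr, hrs⟩ := Metric.isOpen_iff.1 ho 0 h0
  have hna := norm_nonneg a
  refine ⟨min (r / 2) (1 / (‖a‖ + 1)), lt_min (by positivity) (by positivity), ?_, ?_⟩
  · calc _ ≤ 1 / (‖a‖ + 1) * ‖a‖ := by gcongr; exact min_le_right _ _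
      _ ≤ 1 := by rw [one_div, inv_mul_le_iff₀ (by positivity)]; linarith
  · intro w hw
    apply hrs
    rw [mem_ball_zero_iff]
    have := hw.trans (min_le_left _ _)
    linarith

end Part5
section Part6
open Set

lemma ach_convex {N n : ℕ} {U E : Set (Mat N n)} (hU : IsOpen U) {R' L : NNReal} {D : ℝ}
    (hR : ∀ A ∈ U, ∀ z, ‖A.mulVec z‖ ≤ R' * ‖z‖) (hL : 3 * R' + 1 ≤ L)
    (hD : ∀ A ∈ U, Metric.infDist A E ≤ D) {A B ξ : Mat N n} (hA : A ∈ U) (hB : B ∈ U)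
    (hξ : ξ ∈ U) (hrk : (A - B).rank = 1) {l s t : ℝ} (hl0 : 0 < l) (hl1 : l < 1)
    (hξe : ξ = l • A + (1 - l) • B) (hs0 : 0 ≤ s) (ht0 : 0 ≤ t) (hsD : s ≤ D) (htD : t ≤ D)
    (hs : Ach U E L A s) (ht : Ach U E L B t) : Ach U E L ξ (l * s + (1 - l) * t) := by
  intro Ω hΩ hbd c ε hε
  obtain ⟨a, b, hb0, hab⟩ := exists_vecMulVec_of_rank _ hrk
  have hD0 : 0 ≤ D := hs0.trans hsD
  have hna := norm_nonneg a
  have hLip : ∀ A ∈ U, LipschitzWith L (fun x => A.mulVec x) := by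
    intro A hA
    have : LipschitzWith R' (fun x => A.mulVec x) := LipschitzWith.of_dist_le_mul fun x y => by
      rw [dist_eq_norm, dist_eq_norm, ← Matrix.mulVec_sub]; exact hR A hA _
    refine this.weaken (le_trans ?_ hL)
    calc R' ≤ R' + (2 * R' + 1) := le_self_add
      _ = _ := by ring
  have hAe : A = ξ + Matrix.vecMulVec a ((1 - l) • b) := by
    rw [Matrix.vecMulVec_smul, ← hab, hξe]; module
  have hBe : B = ξ + Matrix.vecMulVec a ((-l) • b) := by
    rw [Matrix.vecMulVec_smul, ← hab, hξe]; module
  have hne : (-l) • b ≠ (1 - l) • b := by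
    intro h
    apply hb0
    have : (1:ℝ) • b = 0 := by
      have h2 : (1:ℝ) • b = (1 - l) • b - (-l) • b := by module
      rw [h2, h, sub_self]
    simpa using this
  obtain ⟨ρ, hρ0, hρa, hρU⟩ := exists_rho hU hξ a
  obtain ⟨ζ, hζl, hζ0, hζΩ, ⟨Z, hZ1, hZ⟩, m, hm0, hm⟩ := exists_zeta hΩ hbd
    (ε := ENNReal.ofReal (ε / (2 * (D + 1)))) (by
      have : 0 < ε / (2 * (D + 1)) := by positivity
      simpa using this)
  obtain ⟨η, hη0, hηm, hηa⟩ : ∃ η > 0, η < ρ * m ∧ η * ‖a‖ ≤ ε / 2 := by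
    refine ⟨min (ρ * m / 2) (ε / 2 / (‖a‖ + 1)), lt_min (by positivity) (by positivity), ?_, ?_⟩
    · have : 0 < ρ * m := by positivity
      exact (min_le_left _ _).trans_lt (by linarith)
    · calc _ ≤ ε / 2 / (‖a‖ + 1) * ‖a‖ := by gcongr; exact min_le_right _ _
        _ ≤ ε / 2 := by
          rw [div_mul_eq_mul_div, div_le_iff₀ (by positivity)]
          nlinarith
  have hdotc : Continuous (fun x : Fin n → ℝ => b ⬝ᵥ x) := by fun_prop
  obtain ⟨τ, hτ⟩ := exists_phase hl0.le hl1.le hs0 ht0 (fun x : Fin n → ℝ => (b ⬝ᵥ x) / η)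
    (by fun_prop) Ω
  set T : (Fin n → ℝ) → ℝ := fun x => (b ⬝ᵥ x) / η + τ with hT
  set φ : (Fin n → ℝ) → ℝ := fun x => min (η * saw l (T x)) (ρ * ζ x) with hφ
  have hφ0 : ∀ x, 0 ≤ φ x := fun x =>
    le_min (mul_nonneg hη0.le (saw_nonneg hl0.le hl1.le _)) (mul_nonneg hρ0.le (hζ0 x))
  have hsη : ∀ x, η * saw l (T x) ≤ η := fun x =>
    mul_le_of_le_one_right hη0.le (saw_le_one hl0.le _)
  have hφη : ∀ x, φ x ≤ η := fun x => (min_le_left _ _).trans (hsη x)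
  have hφl : ∀ x y, |φ x - φ y| ≤ max |b ⬝ᵥ (x - y)| (ρ * ‖x - y‖) := by
    intro x y
    refine (abs_min_sub_min_le_max _ _ _ _).trans (max_le_max ?_ ?_)
    · rw [← mul_sub, abs_mul, abs_of_pos hη0]
      calc η * |saw l (T x) - saw l (T y)| ≤ η * |T x - T y| := 
            mul_le_mul_of_nonneg_left (saw_lip hl0.le hl1.le _ _) hη0.le
        _ = |η * (T x - T y)| := by rw [abs_mul, abs_of_pos hη0]
        _ = |b ⬝ᵥ (x - y)| := by
          congr 1
          rw [dotProduct_sub]; simp only [hT]; field_simp; ring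
    · rw [← mul_sub, abs_mul, abs_of_pos hρ0]
      gcongr; exact hζl x y
  have hdotR : ∀ z, |b ⬝ᵥ z| * ‖a‖ ≤ 2 * R' * ‖z‖ := by
    intro z
    have e : |b ⬝ᵥ z| * ‖a‖ = ‖(A - B).mulVec z‖ := by
      rw [hab, vecMulVec_mulVec', norm_smul, Real.norm_eq_abs]
    rw [e, Matrix.sub_mulVec]
    refine (norm_sub_le _ _).trans ?_
    have := hR A hA z
    have := hR B hB z
    linarith
  have hφa : ∀ x y, |φ x - φ y| * ‖a‖ ≤ (2 * R' + 1) * ‖x - y‖ := by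
    intro x y
    have h1 := hφl x y
    have h2 := hdotR (x - y)
    have h3 := norm_nonneg (x - y)
    have h4 : (0:ℝ) ≤ R' := R'.2
    rcases max_choice |b ⬝ᵥ (x - y)| (ρ * ‖x - y‖) with h | h
    · rw [h] at h1
      nlinarith
    · rw [h] at h1
      have : |φ x - φ y| * ‖a‖ ≤ ρ * ‖x - y‖ * ‖a‖ := by gcongr
      nlinarith [mul_nonneg h4 h3]
  have hu0lip : LipschitzWith L (fun x => ξ.mulVec x + c + φ x • a) := by
    have : LipschitzWith (3 * R' + 1) (fun x => ξ.mulVec x + c + φ x • a) := by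
      refine LipschitzWith.of_dist_le_mul fun x y => ?_
      rw [dist_eq_norm, dist_eq_norm]
      have e : ξ.mulVec x + c + φ x • a - (ξ.mulVec y + c + φ y • a) =
          ξ.mulVec (x - y) + (φ x - φ y) • a := by
        rw [Matrix.mulVec_sub]; module
      rw [e]
      refine (norm_add_le _ _).trans ?_
      rw [norm_smul, Real.norm_eq_abs]
      have := hR ξ hξ (x - y)
      have := hφa x y
      push_cast
      linarith
    exact this.weaken hL
  have hζc : Continuous ζ := by
    have : LipschitzWith 1 ζ := LipschitzWith.of_dist_le_mul fun x y => by
      simpa [Real.dist_eq, dist_eq_norm] using hζl x y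
    exact this.continuous
  have hsawc : Continuous (saw l) := by
    have : LipschitzWith 1 (saw l) := LipschitzWith.of_dist_le_mul fun x y => by
      simpa [Real.dist_eq, dist_eq_norm] using saw_lip hl0.le hl1.le x y
    exact this.continuous
  have hTc : Continuous T := by fun_prop
  have hφc : Continuous φ := by
    exact (continuous_const.mul (hsawc.comp hTc)).min (continuous_const.mul hζc)
  obtain ⟨C, hC⟩ := hbd.isCompact_closure.exists_bound_of_continuousOn hTc.continuousOn
  let pA : ℤ → (Fin n → ℝ) × ℝ := fun k => ((1 - l) • b, (1 - l) * η * (τ - k))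
  let pB : ℤ → (Fin n → ℝ) × ℝ := fun k => ((-l) • b, l * η * (k + 1 - τ))
  let F : Finset ((Fin n → ℝ) × ℝ) := (Finset.Icc ⌊-C⌋ ⌊C⌋).image pA ∪
    ((Finset.Icc ⌊-C⌋ ⌊C⌋).image pB ∪ Z.image (fun p => (ρ • p.1, ρ * p.2)))
  have hfl : ∀ x ∈ Ω, ⌊T x⌋ ∈ Finset.Icc ⌊-C⌋ ⌊C⌋ := by
    intro x hx
    have := abs_le.1 (hC x (subset_closure hx))
    exact Finset.mem_Icc.2 ⟨Int.floor_le_floor this.1, Int.floor_le_floor this.2⟩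
  have hFA : ∀ x ∈ Ω, Int.fract (T x) ≤ l → ∃ p ∈ F, p.1 = (1 - l) • b ∧
      η * saw l (T x) = p.1 ⬝ᵥ x + p.2 := by
    intro x hx h
    refine ⟨pA ⌊T x⌋, ?_, rfl, ?_⟩
    · exact Finset.mem_union_left _ (Finset.mem_image_of_mem _ (hfl x hx))
    · rw [saw_of_le h]
      simp only [pA, smul_dotProduct, smul_eq_mul]
      have : b ⬝ᵥ x = η * (T x - τ) := by simp only [hT]; field_simp; ring
      rw [this]; ring
  have hFB : ∀ x ∈ Ω, l < Int.fract (T x) → ∃ p ∈ F, p.1 = (-l) • b ∧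
      η * saw l (T x) = p.1 ⬝ᵥ x + p.2 := by
    intro x hx h
    refine ⟨pB ⌊T x⌋, ?_, rfl, ?_⟩
    · exact Finset.mem_union_right _ (Finset.mem_union_left _
        (Finset.mem_image_of_mem _ (hfl x hx)))
    · rw [saw_of_gt h]
      simp only [pB, smul_dotProduct, smul_eq_mul]
      have : b ⬝ᵥ x = η * (T x - τ) := by simp only [hT]; field_simp; ring
      rw [this]; ring
  have hφF : ∀ x ∈ Ω, ∃ p ∈ F, φ x = p.1 ⬝ᵥ x + p.2 := by
    intro x hx
    rcases min_choice (η * saw l (T x)) (ρ * ζ x) with h | h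
    · rcases le_or_gt (Int.fract (T x)) l with h2 | h2
      · obtain ⟨p, hp, -, hpx⟩ := hFA x hx h2
        exact ⟨p, hp, h.trans hpx⟩
      · obtain ⟨p, hp, -, hpx⟩ := hFB x hx h2
        exact ⟨p, hp, h.trans hpx⟩
    · obtain ⟨p, hp, hpx⟩ := hZ x
      refine ⟨(ρ • p.1, ρ * p.2), ?_, ?_⟩
      · exact Finset.mem_union_right _ (Finset.mem_union_right _
          (Finset.mem_image.2 ⟨p, hp, rfl⟩))
      · refine h.trans ?_
        rw [hpx]; simp only [smul_dotProduct, smul_eq_mul]; ring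
  have hφout : ∀ x ∉ Ω, φ x = 0 := by
    intro x hx
    refine le_antisymm ?_ (hφ0 x)
    refine (min_le_right _ _).trans ?_
    rw [hζΩ x hx, mul_zero]
  have hmemF : ∀ p ∈ F, ξ + Matrix.vecMulVec a p.1 ∈ U := by
    intro p hp
    rcases Finset.mem_union.1 hp with hp | hp
    · obtain ⟨k, -, rfl⟩ := Finset.mem_image.1 hp
      change ξ + Matrix.vecMulVec a ((1 - l) • b) ∈ U
      rw [← hAe]; exact hA
    rcases Finset.mem_union.1 hp with hp | hp
    · obtain ⟨k, -, rfl⟩ := Finset.mem_image.1 hp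
      change ξ + Matrix.vecMulVec a ((-l) • b) ∈ U
      rw [← hBe]; exact hB
    · obtain ⟨q, hq, rfl⟩ := Finset.mem_image.1 hp
      apply hρU
      simp only [norm_smul, Real.norm_eq_abs, abs_of_pos hρ0]
      exact mul_le_of_le_one_right hρ0.le (hZ1 q hq)
  have hadm := adm_family (c := c) hΩ F φ hφc hφF hφout hmemF hu0lip
  set κ : ↥F → ℝ := fun p => if p.1.1 = (1 - l) • b then s else if p.1.1 = (-l) • b then t else D
    with hκ
  have hκD : ∀ p, κ p ≤ D := by
    intro p; simp only [hκ]; split_ifs <;> linarith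
  refine ach_subst hadm hbd hε ?_ κ ?_ ?_
  · intro x
    have e : ξ.mulVec x + c + φ x • a - (ξ.mulVec x + c) = φ x • a := by abel
    rw [e, norm_smul, Real.norm_eq_abs, abs_of_nonneg (hφ0 x)]
    exact (mul_le_mul_of_nonneg_right (hφη x) hna).trans hηa
  · intro p
    simp only [hκ]
    split_ifs with h1 h2
    · rw [h1, ← hAe]; exact hs
    · rw [h2, ← hBe]; exact ht
    · exact (ach_trivial hLip (hmemF p.1 p.2)).mono (hD _ (hmemF p.1 p.2))
  · set P : ↥F → Set (Fin n → ℝ) :=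
      fun p => Ω ∩ ⋂ q ∈ F.erase p.1, {x | φ x ≠ q.1 ⬝ᵥ x + q.2} with hP
    set h : (Fin n → ℝ) → ENNReal :=
      fun x => ENNReal.ofReal (if Int.fract (b ⬝ᵥ x / η + τ) ≤ l then s else t) with hh
    set g : (Fin n → ℝ) → ENNReal :=
      indicator {x | ζ x < m} (fun _ => ENNReal.ofReal D) with hg
    have hmz : MeasurableSet {x | ζ x < m} := (isOpen_lt hζc continuous_const).measurableSet
    have hgm : Measurable g := measurable_const.indicator hmz
    have huq : ∀ p : ↥F, ∀ x ∈ P p, ∀ q ∈ F, φ x = q.1 ⬝ᵥ x + q.2 → p.1 = q := by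
      intro p x hx q hq hqx
      by_contra hne
      exact mem_iInter₂.1 hx.2 q (Finset.mem_erase.2 ⟨fun h => hne h.symm, hq⟩) hqx
    have hpt : ∀ p : ↥F, ∀ x ∈ P p, ENNReal.ofReal (κ p) ≤ h x + g x := by
      intro p x hx
      by_cases hxm : ζ x < m
      · have : g x = ENNReal.ofReal D := indicator_of_mem (s := {x | ζ x < m}) hxm _
        rw [this]
        exact (ENNReal.ofReal_le_ofReal (hκD p)).trans le_add_self
      · refine le_trans (le_of_eq ?_) le_self_add
        have hφs : φ x = η * saw l (T x) := by
          apply min_eq_left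
          have := hsη x
          have h2 : ρ * m ≤ ρ * ζ x := by gcongr; exact not_lt.1 hxm
          linarith
        rcases le_or_gt (Int.fract (T x)) l with h2 | h2
        · obtain ⟨q, hq, hq1, hqx⟩ := hFA x hx.1 h2
          have := huq p x hx q hq (hφs.trans hqx)
          simp only [hh, hκ]
          rw [this, if_pos hq1, if_pos h2]
        · obtain ⟨q, hq, hq1, hqx⟩ := hFB x hx.1 h2
          have := huq p x hx q hq (hφs.trans hqx)
          simp only [hh, hκ]
          rw [this, if_neg (by rw [hq1]; exact hne), if_pos hq1, if_neg (not_le.2 h2)]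
    calc ∑' p, ENNReal.ofReal (κ p) * volume (P p)
        = ∑' p, ∫⁻ x in P p, ENNReal.ofReal (κ p) := by
          congr 1; ext p; rw [setLIntegral_const]
      _ ≤ ∑' p, ∫⁻ x in P p, (h x + g x) := by
          refine ENNReal.tsum_le_tsum fun p => ?_
          exact setLIntegral_mono' (hadm.opn p).measurableSet (hpt p)
      _ = ∫⁻ x in ⋃ p, P p, (h x + g x) := by
          rw [lintegral_iUnion (fun p => (hadm.opn p).measurableSet)]
          exact fun p q hpq => hadm.disj p q hpq
      _ ≤ ∫⁻ x in Ω, (h x + g x) := lintegral_mono_set (iUnion_subset hadm.sub)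
      _ = (∫⁻ x in Ω, h x) + ∫⁻ x in Ω, g x := lintegral_add_right _ hgm
      _ ≤ ENNReal.ofReal (l * s + (1 - l) * t) * volume Ω + ENNReal.ofReal (ε / 2) := by
          refine add_le_add hτ ?_
          rw [hg, lintegral_indicator hmz, setLIntegral_const, Measure.restrict_apply hmz,
            inter_comm]
          calc ENNReal.ofReal D * volume (Ω ∩ {x | ζ x < m})
              ≤ ENNReal.ofReal D * ENNReal.ofReal (ε / (2 * (D + 1))) := by gcongr
            _ = ENNReal.ofReal (D * (ε / (2 * (D + 1)))) := (ENNReal.ofReal_mul hD0).symm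
            _ ≤ _ := by
              apply ENNReal.ofReal_le_ofReal
              rw [← mul_div_assoc, div_le_iff₀ (by positivity)]
              nlinarith

end Part6
section Part7
open Set

lemma exists_op_bound {N n : ℕ} {U : Set (Mat N n)} {R : ℝ} (hR : ∀ A ∈ U, ‖A‖ ≤ R) :
    ∃ R' : NNReal, ∀ A ∈ U, ∀ z, ‖A.mulVec z‖ ≤ R' * ‖z‖ := by
  obtain ⟨C, hC0, hC⟩ := abs_entry_le (N := N) (n := n)
  refine ⟨(n * (C * |R|)).toNNReal, fun A hA z => ?_⟩
  rw [Real.coe_toNNReal _ (by positivity)]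
  refine (pi_norm_le_iff_of_nonneg (by positivity)).2 fun i => ?_
  have hAR : ‖A‖ ≤ |R| := (hR A hA).trans (le_abs_self R)
  calc ‖A.mulVec z i‖ = |∑ j, A i j * z j| := rfl
    _ ≤ ∑ j, |A i j * z j| := Finset.abs_sum_le_sum_abs _ _
    _ ≤ ∑ j : Fin n, C * |R| * ‖z‖ := by
      refine Finset.sum_le_sum fun j _ => ?_
      rw [abs_mul]
      have h1 : |A i j| ≤ C * |R| := (hC A i j).trans (by gcongr)
      have h2 : |z j| ≤ ‖z‖ := norm_le_pi_norm z j
      gcongr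
    _ = _ := by simp; ring

lemma ach_small {N n : ℕ} {E : Set (Mat N n)} {U : Set (Mat N n)} (hU : IsOpen U)
    {R' L : NNReal} {D : ℝ} (hD0 : 0 < D)
    (hR : ∀ A ∈ U, ∀ z, ‖A.mulVec z‖ ≤ R' * ‖z‖) (hL : 3 * R' + 1 ≤ L)
    (hD : ∀ A ∈ U, Metric.infDist A E ≤ D) {ξ : Mat N n} (hξ : ξ ∈ U) {ε R : ℝ} (hε : 0 < ε)
    {E' : Set (Mat N n)} (hE'R : ∀ x ∈ E', ‖x‖ ≤ R) (hE' : RcoF E' ⊆ U)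
    (hE'ε : ∀ η ∈ E', Metric.infDist η E ≤ ε) (hξE' : ξ ∈ RcoF E') : Ach U E L ξ ε := by
  have hLip : ∀ A ∈ U, LipschitzWith L (fun x => A.mulVec x) := by
    intro A hA
    have : LipschitzWith R' (fun x => A.mulVec x) := LipschitzWith.of_dist_le_mul fun x y => by
      rw [dist_eq_norm, dist_eq_norm, ← Matrix.mulVec_sub]; exact hR A hA _
    refine this.weaken (le_trans ?_ hL)
    calc R' ≤ R' + (2 * R' + 1) := le_self_add
      _ = _ := by ring
  set S : Mat N n → ℝ := fun A => sInf {s | 0 ≤ s ∧ Ach U E L A s} with hS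
  have hbdd : ∀ A, BddBelow {s | 0 ≤ s ∧ Ach U E L A s} := fun A => ⟨0, fun s hs => hs.1⟩
  have hmem : ∀ A ∈ U, Metric.infDist A E ∈ {s | 0 ≤ s ∧ Ach U E L A s} := fun A hA =>
    ⟨Metric.infDist_nonneg, ach_trivial hLip hA⟩
  have hSle : ∀ A ∈ U, S A ≤ Metric.infDist A E := fun A hA => csInf_le (hbdd A) (hmem A hA)
  have hS0 : ∀ A ∈ U, 0 ≤ S A := fun A hA => le_csInf ⟨_, hmem A hA⟩ fun s hs => hs.1
  have hSA : ∀ A ∈ U, Ach U E L A (S A) := by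
    intro A hA
    refine Ach.of_forall (hS0 A hA) fun t ht => ?_
    obtain ⟨s, hs, hst⟩ := exists_lt_of_csInf_lt ⟨_, hmem A hA⟩ ht
    exact hs.2.mono hst.le
  have hSD : ∀ A ∈ U, S A ≤ D := fun A hA => (hSle A hA).trans (hD A hA)
  have hconv : ∀ A ∈ U, ∀ B ∈ U, (A - B).rank = 1 → ∀ l ∈ Icc (0:ℝ) 1,
      l • A + (1 - l) • B ∈ U →
      S (l • A + (1 - l) • B) - ε ≤ l * (S A - ε) + (1 - l) * (S B - ε) := by
    intro A hA B hB hrk l hl hlU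
    have key : S (l • A + (1 - l) • B) ≤ l * S A + (1 - l) * S B := by
      rcases hl.1.eq_or_lt with h | h
      · subst h; simp
      rcases hl.2.eq_or_lt with h' | h'
      · subst h'; simp
      refine csInf_le (hbdd _) ⟨?_, ?_⟩
      · have := mul_nonneg h.le (hS0 A hA)
        have := mul_nonneg (sub_pos.2 h').le (hS0 B hB)
        linarith
      · exact ach_convex hU hR hL hD hA hB hlU hrk h h' rfl (hS0 A hA) (hS0 B hB) (hSD A hA)
          (hSD B hB) (hSA A hA) (hSA B hB)
    linarith
  obtain ⟨g, hg, hg0, hgU⟩ := exists_sep E' U hU R hE'R hE'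
  have hF := rankOneConvex_glue (T := fun A => S A - ε) hD0 hg hgU
    (fun x hx => by have := hSD x hx; linarith) hconv
  have hgξ : g ξ ≤ 0 := hξE' g hg hg0
  have hFξ := hξE' _ hF (fun η hη => by
    have h1 := hg0 η hη
    have h2 := hSle η (hE' (subset_RcoF E' hη))
    have h3 := hE'ε η hη
    rw [if_pos (by linarith)]
    refine max_le (by linarith) ?_
    nlinarith)
  rw [if_pos (by linarith)] at hFξ
  have := (le_max_left _ _).trans hFξ
  exact (hSA ξ hξ).mono (by linarith)

lemma matGrad_eq {N n : ℕ} {u : (Fin n → ℝ) → Fin N → ℝ} {P : Set (Fin n → ℝ)} (hP : IsOpen P)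
    {A : Mat N n} {d : Fin N → ℝ} (h : ∀ x ∈ P, u x = A.mulVec x + d) {x : Fin n → ℝ}
    (hx : x ∈ P) : matGrad u x = A := by
  have h1 : HasFDerivAt (fun x => A.mulVec x + d) (LinearMap.toContinuousLinearMap A.mulVecLin) x :=
    (LinearMap.toContinuousLinearMap A.mulVecLin).hasFDerivAt.add_const d
  have h2 : u =ᶠ[nhds x] (fun x => A.mulVec x + d) := by
    filter_upwards [hP.mem_nhds hx] with y hy using h y hy
  have h3 := (h1.congr_of_eventuallyEq h2).fderiv
  ext i j
  rw [matGrad, h3, LinearMap.toMatrix'_apply]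
  simp [Matrix.mulVec, dotProduct, Pi.single_apply]

lemma relax_of_ach {N n : ℕ} {K E : Set (Mat N n)} {L : NNReal}
    (h : ∀ ξ ∈ K, Ach K E L ξ 0) : HasRelaxationProperty K E := by
  intro Ω hΩ hbd ξ hξ b
  have hex := fun ν : ℕ => h ξ hξ Ω hΩ hbd b (1 / ((ν:ℝ) + 1)) (by positivity)
  choose u ι P A d hc hadm hsup hcost using hex
  have hfr : ∀ x ∈ frontier Ω, x ∉ Ω := fun x hx => by
    rw [hΩ.frontier_eq] at hx; exact hx.2
  have hlim : Tendsto (fun ν : ℕ => 1 / ((ν:ℝ) + 1)) atTop (nhds 0) :=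
    tendsto_one_div_add_atTop_nhds_zero_nat
  refine ⟨u, ?_, ?_, ?_, ⟨L, fun ν => (hadm ν).lip.lipschitzOnWith⟩, ?_, ?_⟩
  · intro ν
    refine ⟨(hadm ν).lip.continuous.continuousOn, ?_⟩
    obtain ⟨e, he⟩ := (hc ν).exists_injective_nat
    refine ⟨fun k => ⋃ i, ⋃ _ : e i = k, P ν i, ?_, ?_, ?_, ?_, ?_⟩
    · intro k; exact isOpen_iUnion fun i => isOpen_iUnion fun _ => (hadm ν).opn i
    · intro k; exact iUnion_subset fun i => iUnion_subset fun _ => (hadm ν).sub i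
    · intro k l hkl
      simp only [disjoint_iUnion_left, disjoint_iUnion_right]
      intro j hj i hi
      apply (hadm ν).disj
      rintro rfl
      first
        | exact hkl (hi.symm.trans hj)
        | exact hkl (hj.symm.trans hi)
    · have : ⋃ k, ⋃ i, ⋃ _ : e i = k, P ν i = ⋃ i, P ν i := by
        ext x; simp
      rw [this]; exact (hadm ν).null
    · intro k
      by_cases hk : ∃ i, e i = k
      · obtain ⟨i, rfl⟩ := hk
        refine ⟨A ν i, d ν i, fun x hx => ?_⟩
        simp only [mem_iUnion] at hx
        obtain ⟨j, hj, hx⟩ := hx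
        rw [he hj] at hx
        exact (hadm ν).aff i x hx
      · refine ⟨0, 0, fun x hx => ?_⟩
        simp only [mem_iUnion] at hx
        obtain ⟨j, hj, hx⟩ := hx
        exact absurd ⟨j, hj⟩ hk
  · intro ν
    exact ⟨⟨L, (hadm ν).lip.lipschitzOnWith⟩, fun x hx => (hadm ν).out x (hfr x hx)⟩
  · intro ν
    rw [ae_restrict_iff' hΩ.measurableSet]
    refine measure_mono_null ?_ (hadm ν).null
    intro x hx
    have hx' : ¬ (x ∈ Ω → matGrad (u ν) x ∈ E ∪ K) := hx
    push Not at hx'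
    refine ⟨hx'.1, fun hxP => hx'.2 ?_⟩
    obtain ⟨i, hi⟩ := mem_iUnion.1 hxP
    rw [matGrad_eq ((hadm ν).opn i) ((hadm ν).aff i) hi]
    exact Or.inr ((hadm ν).mem i)
  · rw [Metric.tendstoUniformlyOn_iff]
    intro ε hε
    filter_upwards [hlim.eventually (gt_mem_nhds hε)] with ν hν x _
    rw [dist_comm, dist_eq_norm]
    exact (hsup ν x).trans_lt hν
  · refine squeeze_zero_norm (fun ν => ?_) hlim
    have := hc ν
    have h1 : ∫⁻ x in Ω, ENNReal.ofReal ‖Metric.infDist (matGrad (u ν) x) E‖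
        ≤ ENNReal.ofReal (1 / ((ν:ℝ) + 1)) := by
      calc ∫⁻ x in Ω, ENNReal.ofReal ‖Metric.infDist (matGrad (u ν) x) E‖
          ≤ ∫⁻ x in ⋃ i, P ν i, ENNReal.ofReal ‖Metric.infDist (matGrad (u ν) x) E‖ := by
            refine lintegral_mono' (Measure.restrict_mono_ae ?_) le_rfl
            rw [ae_le_set]; exact (hadm ν).null
        _ ≤ ∑' i, ∫⁻ x in P ν i, ENNReal.ofReal ‖Metric.infDist (matGrad (u ν) x) E‖ :=
            lintegral_iUnion_le _ _
        _ = ∑' i, ENNReal.ofReal (Metric.infDist (A ν i) E) * volume (P ν i) := by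
            congr 1; ext i
            rw [← setLIntegral_const]
            refine setLIntegral_congr_fun ((hadm ν).opn i).measurableSet fun x hx => ?_
            rw [matGrad_eq ((hadm ν).opn i) ((hadm ν).aff i) hx, Real.norm_eq_abs,
              abs_of_nonneg Metric.infDist_nonneg]
        _ ≤ _ := (hcost ν).trans (by simp)
    refine (norm_integral_le_lintegral_norm _).trans ?_
    exact ENNReal.toReal_le_of_le_ofReal (by positivity) h1

end Part7
section Statements

open Metric Set

theorem stmt2 {N n : ℕ} (E : Set (Mat N n)) (hE : Bornology.IsBounded E)
    (Eδ : ℝ → Set (Mat N n)) (hEδc : ∀ δ > 0, IsCompact (Eδ δ))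
    (hsub : ∀ δ > 0, RcoF (Eδ δ) ⊆ interior (RcoF E))
    (h1 : ∀ ε > 0, ∃ δ₀ > 0, ∀ δ ∈ Set.Ioc (0:ℝ) δ₀, ∀ η ∈ Eδ δ, Metric.infDist η E ≤ ε)
    (h2 : ∀ η ∈ interior (RcoF E), ∃ δ₀ > 0, ∀ δ ∈ Set.Ioc (0:ℝ) δ₀, η ∈ RcoF (Eδ δ)) :
    HasRelaxationProperty (interior (RcoF E)) E := by
  obtain ⟨R, hR0, hR⟩ := hE.exists_pos_norm_le
  have hRco := RcoF_norm_le E R hR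
  have hRU : ∀ A ∈ interior (RcoF E), ‖A‖ ≤ R := fun A hA => hRco A (interior_subset hA)
  obtain ⟨R', hR'⟩ := exists_op_bound hRU
  have hD : ∀ A ∈ interior (RcoF E), infDist A E ≤ 2 * R := by
    intro A hA
    rcases E.eq_empty_or_nonempty with he | ⟨e, he⟩
    · rw [he, infDist_empty]; positivity
    · refine (infDist_le_dist_of_mem he).trans ?_
      rw [dist_eq_norm]
      refine (norm_sub_le _ _).trans ?_
      have := hRU A hA
      have := hR e he
      linarith
  apply relax_of_ach (L := 3 * R' + 1)
  intro ξ hξ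
  refine Ach.of_forall le_rfl fun ε hε => ?_
  obtain ⟨δ₁, hδ₁, h1⟩ := h1 ε hε
  obtain ⟨δ₂, hδ₂, h2⟩ := h2 ξ hξ
  have hδ : 0 < min δ₁ δ₂ := lt_min hδ₁ hδ₂
  refine ach_small (R := R) isOpen_interior (by positivity : 0 < 2 * R) hR' le_rfl hD hξ hε ?_
    (hsub _ hδ) (h1 _ ⟨hδ, min_le_left _ _⟩) (h2 _ ⟨hδ, min_le_right _ _⟩)
  intro x hx
  exact hRU x (hsub _ hδ (subset_RcoF _ hx))

end Statements
end

section
/- Let E, K ⊆ ℝ^{N×n} with E compact and K bounded. Assume condition (H): for every δ > 0 there exists L = L(δ, E, K) ∈ ℕ such that for every ξ ∈ int K \ B_δ(E) there exist matrices η_1,…,η_J ∈ ℝ^{N×n}, J ∈ ℕ, J ≤ L, with rank(η_j) = 1 for j = 1,…,J, such that the segment [ξ+η_1+…+η_{j−1}−η_j, ξ+η_1+…+η_{j−1}+η_j] is contained in int K for every j = 1,…,J, and ξ+η_1+…+η_J ∈ B_δ(E). Then int K has the relaxation property with respect to E. -/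
open MeasureTheory Filter

attribute [local instance] Classical.propDecidable
attribute [local instance] Matrix.frobeniusNormedAddCommGroup Matrix.frobeniusNormedSpace

section Core

open MeasureTheory Filter Topology Set

theorem rx_glue {ι V W : Type*} [NormedAddCommGroup V] [NormedSpace ℝ V]
    [NormedAddCommGroup W] [NormedSpace ℝ W] (C : NNReal) (D : ι → Set V)
    (hD : ∀ i, IsOpen (D i)) (hdisj : ∀ i j, i ≠ j → Disjoint (D i) (D j))
    (f : ι → V → W) (g : V → W) (hf : ∀ i, LipschitzWith C (f i)) (hg : LipschitzWith C g)
    (hb : ∀ i, ∀ x ∈ frontier (D i), f i x = g x) :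
    ∃ F : V → W, LipschitzWith C F ∧ (∀ i, ∀ x ∈ D i, F x = f i x) ∧
      ∀ x, (∀ i, x ∉ D i) → F x = g x := by
  classical
  let F : V → W := fun x => if h : ∃ i, x ∈ D i then f h.choose x else g x
  have hF1 : ∀ i, ∀ x ∈ D i, F x = f i x := by
    intro i x hx
    have h : ∃ i, x ∈ D i := ⟨i, hx⟩
    have : h.choose = i := by
      by_contra hne
      exact Set.disjoint_left.1 (hdisj _ _ hne) h.choose_spec hx
    simp only [F, dif_pos h, this]
  have hF2 : ∀ x, (∀ i, x ∉ D i) → F x = g x := by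
    intro x hx
    have h : ¬ ∃ i, x ∈ D i := by push Not; exact hx
    simp only [F, dif_neg h]
  have hfr : ∀ i, ∀ p ∈ frontier (D i), ∀ k, p ∉ D k := by
    intro i p hp k hk
    by_cases hki : k = i
    · subst hki
      rw [(hD k).frontier_eq] at hp
      exact hp.2 hk
    · have := (hdisj k i hki).closure_right (hD k)
      exact Set.disjoint_left.1 this hk (frontier_subset_closure hp)
  have hex : ∀ i, ∀ x ∈ D i, ∀ y, y ∉ D i → ∃ p ∈ segment ℝ x y, p ∈ frontier (D i) := by
    intro i x hx y hy
    have hc : IsPreconnected (segment ℝ x y) := (convex_segment x y).isPreconnected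
    by_contra hcon
    push Not at hcon
    have hout : ∀ p ∈ segment ℝ x y, p ∉ D i → p ∈ (closure (D i))ᶜ := by
      intro p hp hpD hpc
      exact hcon p hp (by rw [(hD i).frontier_eq]; exact ⟨hpc, hpD⟩)
    obtain ⟨p, _, hp1, hp2⟩ := hc (D i) (closure (D i))ᶜ (hD i) isClosed_closure.isOpen_compl
      (fun p hp => by
        by_cases h : p ∈ D i
        · exact Or.inl h
        · exact Or.inr (hout p hp h))
      ⟨x, left_mem_segment ℝ x y, hx⟩ ⟨y, right_mem_segment ℝ x y, hout y (right_mem_segment ℝ x y) hy⟩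
    exact hp2 (subset_closure hp1)
  have hA : ∀ x y, (∀ i, y ∉ D i) → dist (F x) (F y) ≤ C * dist x y := by
    intro x y hy
    by_cases h : ∃ i, x ∈ D i
    · obtain ⟨i, hi⟩ := h
      obtain ⟨p, hp, hpf⟩ := hex i x hi y (hy i)
      rw [hF1 i x hi, hF2 y hy, ← dist_add_dist_of_mem_segment hp, mul_add]
      calc dist (f i x) (g y) ≤ dist (f i x) (f i p) + dist (f i p) (g y) := dist_triangle _ _ _
        _ ≤ _ := by
          rw [hb i p hpf]
          refine add_le_add ?_ (hg.dist_le_mul _ _)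
          rw [← hb i p hpf]
          exact (hf i).dist_le_mul _ _
    · push Not at h
      rw [hF2 x h, hF2 y hy]
      exact hg.dist_le_mul _ _
  refine ⟨F, LipschitzWith.of_dist_le_mul ?_, hF1, hF2⟩
  intro x y
  by_cases h : ∃ i, x ∈ D i
  · obtain ⟨i, hi⟩ := h
    by_cases hy : y ∈ D i
    · rw [hF1 i x hi, hF1 i y hy]
      exact (hf i).dist_le_mul _ _
    · obtain ⟨p, hp, hpf⟩ := hex i x hi y hy
      have h1 := hA y p (hfr i p hpf)
      have h2 := hA x p (hfr i p hpf)
      rw [dist_comm (F y), dist_comm y] at h1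
      rw [← dist_add_dist_of_mem_segment hp, mul_add]
      exact (dist_triangle _ (F p) _).trans (add_le_add h2 h1)
  · push Not at h
    have := hA y x h
    rwa [dist_comm (F y), dist_comm y] at this

/-- Points of `Ω` near which `u` is affine with slope in `S`. -/
def rxGood {V W : Type*} [NormedAddCommGroup V] [NormedSpace ℝ V]
    [NormedAddCommGroup W] [NormedSpace ℝ W] (Ω : Set V) (u : V → W) (S : Set (V →L[ℝ] W)) :
    Set V :=
  {x | x ∈ Ω ∧ ∃ A ∈ S, ∃ c : W, ∀ᶠ y in 𝓝 x, u y = A y + c}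

theorem rxGood_isOpen {V W : Type*} [NormedAddCommGroup V] [NormedSpace ℝ V]
    [NormedAddCommGroup W] [NormedSpace ℝ W] {Ω : Set V} (hΩ : IsOpen Ω) (u : V → W)
    (S : Set (V →L[ℝ] W)) : IsOpen (rxGood Ω u S) := by
  rw [isOpen_iff_mem_nhds]
  rintro x ⟨hx, A, hA, c, hc⟩
  filter_upwards [hΩ.mem_nhds hx, eventually_eventually_nhds.2 hc] with y hy hy2
  exact ⟨hy, A, hA, c, hy2⟩

theorem rx_unique {V W : Type*} [NormedAddCommGroup V] [NormedSpace ℝ V]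
    [NormedAddCommGroup W] [NormedSpace ℝ W] {u : V → W} {x : V} {A A' : V →L[ℝ] W} {c c' : W}
    (h : ∀ᶠ y in 𝓝 x, u y = A y + c) (h' : ∀ᶠ y in 𝓝 x, u y = A' y + c') :
    A = A' ∧ c = c' := by
  have key : ∀ (B : V →L[ℝ] W) (d : W), (∀ᶠ y in 𝓝 x, u y = B y + d) → HasFDerivAt u B x := by
    intro B d hd
    exact (B.hasFDerivAt.add_const d).congr_of_eventuallyEq hd
  have hAA := (key A c h).unique (key A' c' h')
  subst hAA
  refine ⟨rfl, ?_⟩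
  have := h.self_of_nhds.symm.trans h'.self_of_nhds
  exact add_left_cancel this

/-- The inductive solvability notion. -/
def RxPre {n : ℕ} {W : Type*} [NormedAddCommGroup W] [NormedSpace ℝ W] (C : NNReal)
    (U S : Set ((Fin n → ℝ) →L[ℝ] W)) (θ : ℝ) (ξ : (Fin n → ℝ) →L[ℝ] W) : Prop :=
  ∀ Ω : Set (Fin n → ℝ), IsOpen Ω → Bornology.IsBounded Ω → ∀ b : W, ∀ ε > (0 : ℝ),
    ∃ u : (Fin n → ℝ) → W, LipschitzWith C u ∧ (∀ x, x ∉ Ω → u x = ξ x + b) ∧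
      (∀ x, ‖u x - (ξ x + b)‖ ≤ ε) ∧ volume (Ω \ rxGood Ω u U) = 0 ∧
      ENNReal.ofReal θ * volume Ω ≤ volume (rxGood Ω u S)

theorem rx_triv {n : ℕ} {W : Type*} [NormedAddCommGroup W] [NormedSpace ℝ W] {C : NNReal}
    {U S : Set ((Fin n → ℝ) →L[ℝ] W)} {θ : ℝ} {ξ : (Fin n → ℝ) →L[ℝ] W}
    (hC : ‖ξ‖ ≤ C) (hU : ξ ∈ U) (h : (θ = 0) ∨ (θ = 1 ∧ ξ ∈ S)) : RxPre C U S θ ξ := by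
  intro Ω hΩ _ b ε hε
  have hgood : ∀ S' : Set ((Fin n → ℝ) →L[ℝ] W), ξ ∈ S' → rxGood Ω (fun x => ξ x + b) S' = Ω := by
    intro S' hS'
    ext x
    exact ⟨fun h => h.1, fun h => ⟨h, ξ, hS', b, Eventually.of_forall fun y => rfl⟩⟩
  refine ⟨fun x => ξ x + b, ?_, fun _ _ => rfl, fun x => by simp [hε.le], ?_, ?_⟩
  · refine LipschitzWith.of_dist_le_mul fun x y => ?_
    rw [dist_add_right, dist_eq_norm, dist_eq_norm, ← map_sub]
    exact (ξ.le_opNorm _).trans (mul_le_mul_of_nonneg_right hC (norm_nonneg _))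
  · rw [hgood U hU]; simp
  · rcases h with h | ⟨h, hS⟩
    · simp [h]
    · rw [hgood S hS, h]; simp

theorem rx_comp {n : ℕ} {W : Type*} [NormedAddCommGroup W] [NormedSpace ℝ W] {C : NNReal}
    {U S T : Set ((Fin n → ℝ) →L[ℝ] W)} (hSU : S ⊆ U) {θ l m : ℝ} (hθ : 0 ≤ θ) (hm : 0 ≤ m)
    (hml : m ≤ l) {ξ : (Fin n → ℝ) →L[ℝ] W} (hξ : RxPre C U S θ ξ)
    (hS : ∀ A ∈ S, RxPre C U T l A) (hU : ∀ A ∈ U, RxPre C U T m A) :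
    RxPre C U T (m + (l - m) * θ) ξ := by
  classical
  intro Ω hΩ hΩb b ε hε
  obtain ⟨u, huL, hub, huε, huU, huS⟩ := hξ Ω hΩ hΩb b (ε / 2) (by positivity)
  let Q : ((Fin n → ℝ) →L[ℝ] W) × W → Set (Fin n → ℝ) :=
    fun p => Ω ∩ interior {x | u x = p.1 x + p.2}
  have hQ : ∀ p x, x ∈ Q p ↔ x ∈ Ω ∧ ∀ᶠ y in 𝓝 x, u y = p.1 y + p.2 := by
    intro p x
    simp only [Q, mem_inter_iff, mem_interior_iff_mem_nhds]
    rfl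
  let ι := {p : ((Fin n → ℝ) →L[ℝ] W) × W // p.1 ∈ U ∧ (Q p).Nonempty}
  let P : ι → Set (Fin n → ℝ) := fun p => Q p.1
  have hPo : ∀ i, IsOpen (P i) := fun i => hΩ.inter isOpen_interior
  have hPΩ : ∀ i, P i ⊆ Ω := fun i => inter_subset_left
  have hPd : ∀ i j, i ≠ j → Disjoint (P i) (P j) := by
    intro i j hij
    rw [Set.disjoint_left]
    intro x hx hx'
    have := rx_unique ((hQ _ _).1 hx).2 ((hQ _ _).1 hx').2
    exact hij (Subtype.ext (Prod.ext this.1 this.2))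
  have hcount : Countable ι :=
    Pairwise.countable_of_isOpen_disjoint (s := P) (fun i j h => hPd i j h) hPo (fun i => i.2.2)
  let lam : ι → ℝ := fun i => if i.1.1 ∈ S then l else m
  have hlam : ∀ i : ι, RxPre C U T (lam i) i.1.1 := by
    intro i
    by_cases h : i.1.1 ∈ S
    · simp only [lam, if_pos h]; exact hS _ h
    · simp only [lam, if_neg h]; exact hU _ i.2.1
  have hloc := fun i : ι => hlam i (P i) (hPo i) (hΩb.subset (hPΩ i)) i.1.2 (ε / 2) (by positivity)
  choose w hwL hwb hwε hwU hwT using hloc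
  have huP : ∀ i : ι, ∀ x ∈ P i, u x = i.1.1 x + i.1.2 := fun i x hx =>
    ((hQ _ _).1 hx).2.self_of_nhds
  obtain ⟨F, hFL, hF1, hF2⟩ := rx_glue C P hPo hPd w u hwL huL (by
    intro i x hx
    have h1 : x ∉ P i := by
      rw [(hPo i).frontier_eq] at hx; exact hx.2
    rw [hwb i x h1]
    have : EqOn u (fun x => i.1.1 x + i.1.2) (closure (P i)) :=
      EqOn.closure (fun x hx => huP i x hx) huL.continuous (by fun_prop)
    exact (this (frontier_subset_closure hx)).symm)
  have hgood : ∀ X i, rxGood (P i) (w i) X ⊆ rxGood Ω F X := by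
    rintro X i x ⟨hx, A, hA, c, hc⟩
    refine ⟨hPΩ i hx, A, hA, c, ?_⟩
    filter_upwards [hc, (hPo i).mem_nhds hx] with y hy hy2
    rw [hF1 i y hy2, hy]
  have hcov : ∀ x ∈ rxGood Ω u U, ∃ i, x ∈ P i := by
    rintro x ⟨hx, A, hA, c, hc⟩
    have : x ∈ Q (A, c) := (hQ _ _).2 ⟨hx, hc⟩
    exact ⟨⟨(A, c), hA, ⟨x, this⟩⟩, this⟩
  have hvol : volume Ω ≤ ∑' i, volume (P i) := by
    calc volume Ω ≤ volume ((Ω \ rxGood Ω u U) ∪ ⋃ i, P i) := by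
          apply measure_mono
          intro x hx
          by_cases h : x ∈ rxGood Ω u U
          · exact Or.inr (mem_iUnion.2 (hcov x h))
          · exact Or.inl ⟨hx, h⟩
      _ ≤ volume (Ω \ rxGood Ω u U) + volume (⋃ i, P i) := measure_union_le _ _
      _ ≤ _ := by rw [huU, zero_add]; exact measure_iUnion_le _
  have hvolS : volume (rxGood Ω u S) ≤ ∑' i : ι, if i.1.1 ∈ S then volume (P i) else 0 := by
    calc volume (rxGood Ω u S) ≤ volume (⋃ i : ι, if i.1.1 ∈ S then P i else ∅) := by
          apply measure_mono
          rintro x ⟨hx, A, hA, c, hc⟩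
          have : x ∈ Q (A, c) := (hQ _ _).2 ⟨hx, hc⟩
          refine mem_iUnion.2 ⟨⟨(A, c), hSU hA, ⟨x, this⟩⟩, ?_⟩
          rw [if_pos hA]; exact this
      _ ≤ ∑' i : ι, volume (if i.1.1 ∈ S then P i else ∅) := measure_iUnion_le _
      _ = _ := by
          congr 1; ext i
          split_ifs <;> simp
  refine ⟨F, hFL, ?_, ?_, ?_, ?_⟩
  · intro x hx
    rw [hF2 x (fun i hi => hx (hPΩ i hi)), hub x hx]
  · intro x
    by_cases h : ∃ i, x ∈ P i
    · obtain ⟨i, hi⟩ := h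
      have h1 := hwε i x
      have h2 := huε x
      rw [huP i x hi] at h2
      rw [hF1 i x hi]
      calc _ = ‖(w i x - (i.1.1 x + i.1.2)) + ((i.1.1 x + i.1.2) - (ξ x + b))‖ := by
            congr 1; abel
        _ ≤ _ := norm_add_le _ _
        _ ≤ ε := by linarith
    · push Not at h
      rw [hF2 x h]
      linarith [huε x]
  · have : Ω \ rxGood Ω F U ⊆ (Ω \ rxGood Ω u U) ∪ ⋃ i, (P i \ rxGood (P i) (w i) U) := by
      rintro x ⟨hx, hx2⟩
      by_cases h : x ∈ rxGood Ω u U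
      · obtain ⟨i, hi⟩ := hcov x h
        exact Or.inr (mem_iUnion.2 ⟨i, hi, fun h' => hx2 (hgood U i h')⟩)
      · exact Or.inl ⟨hx, h⟩
    refine measure_mono_null this ?_
    rw [measure_union_null_iff, measure_iUnion_null_iff]
    exact ⟨huU, hwU⟩
  · have hθ' : ENNReal.ofReal (m + (l - m) * θ)
        = ENNReal.ofReal m + ENNReal.ofReal (l - m) * ENNReal.ofReal θ := by
      rw [ENNReal.ofReal_add hm (mul_nonneg (by linarith) hθ), ENNReal.ofReal_mul (by linarith)]
    calc ENNReal.ofReal (m + (l - m) * θ) * volume Ω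
        = ENNReal.ofReal m * volume Ω
          + ENNReal.ofReal (l - m) * (ENNReal.ofReal θ * volume Ω) := by
          rw [hθ', add_mul, mul_assoc]
      _ ≤ ENNReal.ofReal m * ∑' i, volume (P i)
          + ENNReal.ofReal (l - m) * ∑' i : ι, (if i.1.1 ∈ S then volume (P i) else 0) := by
          gcongr
          exact huS.trans hvolS
      _ = ∑' i : ι, ENNReal.ofReal (lam i) * volume (P i) := by
          rw [← ENNReal.tsum_mul_left, ← ENNReal.tsum_mul_left, ← ENNReal.tsum_add]
          congr 1; ext i
          by_cases h : i.1.1 ∈ S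
          · simp only [lam, if_pos h]
            rw [← add_mul, ← ENNReal.ofReal_add hm (by linarith)]
            congr 2; ring
          · simp only [lam, if_neg h]; simp
      _ ≤ ∑' i : ι, volume (rxGood (P i) (w i) T) := ENNReal.tsum_le_tsum fun i => hwT i
      _ = volume (⋃ i, rxGood (P i) (w i) T) := by
          rw [measure_iUnion]
          · intro i j hij
            exact (hPd i j hij).mono (fun x hx => hx.1) (fun x hx => hx.1)
          · exact fun i => (rxGood_isOpen (hPo i) _ _).measurableSet
      _ ≤ _ := measure_mono (iUnion_subset fun i => hgood T i)

/-- The anisotropic norm whose balls are the cells. -/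
def rxN {n : ℕ} (φ : (Fin n → ℝ) →L[ℝ] ℝ) (ε : ℝ) (x : Fin n → ℝ) : ℝ :=
  |φ x| + ε * ∑ i, |x i|

theorem rxN_continuous {n : ℕ} (φ : (Fin n → ℝ) →L[ℝ] ℝ) (ε : ℝ) : Continuous (rxN φ ε) := by
  unfold rxN; fun_prop

theorem rxN_neg {n : ℕ} (φ : (Fin n → ℝ) →L[ℝ] ℝ) (ε : ℝ) (x : Fin n → ℝ) :
    rxN φ ε (-x) = rxN φ ε x := by
  simp [rxN]

theorem rxN_smul {n : ℕ} (φ : (Fin n → ℝ) →L[ℝ] ℝ) (ε : ℝ) (x : Fin n → ℝ) {t : ℝ} (ht : 0 ≤ t) :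
    rxN φ ε (t • x) = t * rxN φ ε x := by
  simp [rxN, abs_mul, abs_of_nonneg ht, ← Finset.mul_sum]; ring

theorem rxN_add {n : ℕ} (φ : (Fin n → ℝ) →L[ℝ] ℝ) {ε : ℝ} (hε : 0 ≤ ε) (x y : Fin n → ℝ) :
    rxN φ ε (x + y) ≤ rxN φ ε x + rxN φ ε y := by
  have h1 : |φ (x + y)| ≤ |φ x| + |φ y| := by rw [map_add]; exact abs_add_le _ _
  have h2 : ∑ i, |(x + y) i| ≤ ∑ i, |x i| + ∑ i, |y i| := by
    rw [← Finset.sum_add_distrib]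
    exact Finset.sum_le_sum fun i _ => abs_add_le _ _
  have := mul_le_mul_of_nonneg_left h2 hε
  unfold rxN; linarith

theorem rx_sum_le {n : ℕ} (x : Fin n → ℝ) : ∑ i, |x i| ≤ n * ‖x‖ := by
  calc ∑ i, |x i| ≤ ∑ _i : Fin n, ‖x‖ := Finset.sum_le_sum fun i _ => norm_le_pi_norm x i
    _ = _ := by simp

theorem rx_le_sum {n : ℕ} (x : Fin n → ℝ) : ‖x‖ ≤ ∑ i, |x i| := by
  rw [pi_norm_le_iff_of_nonneg (Finset.sum_nonneg fun i _ => abs_nonneg _)]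
  intro i
  exact Finset.single_le_sum (f := fun i => |x i|) (fun i _ => abs_nonneg _) (Finset.mem_univ i)

theorem rx_lip {V W : Type*} [NormedAddCommGroup V] [NormedSpace ℝ V]
    [NormedAddCommGroup W] [NormedSpace ℝ W] (ξ : V →L[ℝ] W) (φ : V →L[ℝ] ℝ) (a : W) {M : ℝ}
    (h1 : ‖ξ + φ.smulRight a‖ ≤ M) (h2 : ‖ξ - φ.smulRight a‖ ≤ M) (z : V) (s t : ℝ)
    (hs : |s| ≤ |φ z| + t) (ht : 0 ≤ t) (hta : t * ‖a‖ ≤ ‖z‖) :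
    ‖ξ z + s • a‖ ≤ (M + 1) * ‖z‖ := by
  obtain ⟨k, hk1, hk2, hk⟩ : ∃ k : ℝ, -1 ≤ k ∧ k ≤ 1 ∧ |s - k * φ z| ≤ t := by
    have hQ : 0 ≤ |φ z| + t := by positivity
    rcases hQ.eq_or_lt with hQ | hQ
    · refine ⟨0, by norm_num, by norm_num, ?_⟩
      have : |φ z| = 0 := by linarith [abs_nonneg (φ z)]
      simp only [zero_mul, sub_zero]; linarith
    · have hk' : |s / (|φ z| + t)| ≤ 1 := by
        rw [abs_div, abs_of_pos hQ, div_le_one hQ]; exact hs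
      have e : s = s / (|φ z| + t) * (|φ z| + t) := by field_simp
      set k' := s / (|φ z| + t)
      have hk2 := abs_le.1 hk'
      have hfin : |k' * t| ≤ t := by
        rw [abs_mul, abs_of_nonneg ht]; nlinarith
      rcases le_total 0 (φ z) with h | h
      · refine ⟨k', hk2.1, hk2.2, ?_⟩
        rw [abs_of_nonneg h] at e
        rw [show s - k' * φ z = k' * t by linarith]; exact hfin
      · refine ⟨-k', by linarith, by linarith, ?_⟩
        rw [abs_of_nonpos h] at e
        rw [show s - -k' * φ z = k' * t by linarith]; exact hfin
  have e : ξ z + s • a = ((1 + k) / 2) • ((ξ + φ.smulRight a) z)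
      + ((1 - k) / 2) • ((ξ - φ.smulRight a) z) + (s - k * φ z) • a := by
    simp only [_root_.add_apply, _root_.sub_apply,
      ContinuousLinearMap.smulRight_apply]
    module
  have n1 := (ξ + φ.smulRight a).le_of_opNorm_le h1 z
  have n2 := (ξ - φ.smulRight a).le_of_opNorm_le h2 z
  rw [e]
  refine (norm_add₃_le).trans ?_
  rw [norm_smul, norm_smul, norm_smul, Real.norm_of_nonneg (by linarith : 0 ≤ (1 + k) / 2),
    Real.norm_of_nonneg (by linarith : 0 ≤ (1 - k) / 2), Real.norm_eq_abs]
  have m1 := mul_le_mul_of_nonneg_left n1 (by linarith : 0 ≤ (1 + k) / 2)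
  have m2 := mul_le_mul_of_nonneg_left n2 (by linarith : 0 ≤ (1 - k) / 2)
  have m3 := mul_le_mul_of_nonneg_right hk (norm_nonneg a)
  nlinarith

theorem rx_abs_germ {V : Type*} [TopologicalSpace V] (g : V → ℝ) (hg : Continuous g) (x : V)
    (hx : g x ≠ 0) :
    ∀ᶠ y in 𝓝 x, |g y| = (if 0 < g x then (1 : ℝ) else -1) * g y := by
  rcases lt_or_gt_of_ne hx with h | h
  · filter_upwards [hg.continuousAt.eventually (gt_mem_nhds h)] with y hy
    rw [if_neg (not_lt.2 h.le), abs_of_neg hy]; ring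
  · filter_upwards [hg.continuousAt.eventually (lt_mem_nhds h)] with y hy
    rw [if_pos h, abs_of_pos hy]; ring

theorem rx_hyper_null {n : ℕ} (φ : (Fin n → ℝ) →L[ℝ] ℝ) (hφ : φ ≠ 0) (c : Fin n → ℝ) :
    volume {x : Fin n → ℝ | φ (x - c) = 0} = 0 := by
  have h := Measure.addHaar_submodule (volume : Measure (Fin n → ℝ)) (LinearMap.ker φ.toLinearMap)
    (by
      intro h
      apply hφ
      have := LinearMap.ker_eq_top.1 h
      ext x
      exact LinearMap.congr_fun this x)
  have e : {x : Fin n → ℝ | φ (x - c) = 0} =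
      (fun x => x - c) ⁻¹' (LinearMap.ker φ.toLinearMap : Set (Fin n → ℝ)) := by
    ext x; simp
  rw [e, (measurePreserving_sub_right volume c).measure_preimage_emb
    (MeasurableEquiv.subRight c).measurableEmbedding]
  exact h

theorem rx_cell {n : ℕ} {W : Type*} [NormedAddCommGroup W] [NormedSpace ℝ W]
    {U S : Set ((Fin n → ℝ) →L[ℝ] W)} (ξ : (Fin n → ℝ) →L[ℝ] W) (φ : (Fin n → ℝ) →L[ℝ] ℝ)
    (hφ : φ ≠ 0) (a b : W) {ε ρ : ℝ} (hε : 0 ≤ ε) (hερ : ε * (n * ‖a‖) < ρ) (hSU : S ⊆ U)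
    (hS : Metric.ball (ξ + φ.smulRight a) ρ ⊆ S) (hU : Metric.ball (ξ - φ.smulRight a) ρ ⊆ U)
    (c : Fin n → ℝ) (r : ℝ) (D : Set (Fin n → ℝ)) (hD : D = {x | rxN φ ε (x - c) < r})
    (f : (Fin n → ℝ) → W) (hf : f = fun x => ξ x + b + (r - rxN φ ε (x - c)) • a) :
    volume (D \ rxGood D f U) = 0 ∧ ENNReal.ofReal (1 / 2) * volume D ≤ volume (rxGood D f S) := by
  have hDo : IsOpen D := by
    rw [hD]
    exact isOpen_lt ((rxN_continuous φ ε).comp (by fun_prop)) continuous_const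
  let Z : Set (Fin n → ℝ) := {x | φ (x - c) = 0} ∪ ⋃ i, {x | (x - c) i = 0}
  have hZ : volume Z = 0 := by
    rw [measure_union_null_iff, measure_iUnion_null_iff]
    refine ⟨rx_hyper_null φ hφ c, fun i => ?_⟩
    refine rx_hyper_null (ContinuousLinearMap.proj i) ?_ c
    intro h
    have := congrArg (fun f => f (Pi.single i (1:ℝ))) h
    simp at this
  have key : ∀ x ∈ D, x ∉ Z → ∃ A : (Fin n → ℝ) →L[ℝ] W, ∃ d : W,
      (∀ᶠ y in 𝓝 x, f y = A y + d) ∧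
      ‖A - (ξ - (if 0 < φ (x - c) then (1:ℝ) else -1) • φ.smulRight a)‖ < ρ := by
    intro x hx hxZ
    have hx1 : φ (x - c) ≠ 0 := fun h => hxZ (Or.inl h)
    have hx2 : ∀ i, (x - c) i ≠ 0 := fun i h => hxZ (Or.inr (mem_iUnion.2 ⟨i, h⟩))
    have g1 := rx_abs_germ (fun y => φ (y - c)) (by fun_prop) x hx1
    have g2 : ∀ i, _ := fun i => rx_abs_germ (fun y => (y - c) i) (by fun_prop) x (hx2 i)
    rw [← eventually_all] at g2
    set σ : ℝ := if 0 < φ (x - c) then (1:ℝ) else -1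
    let τ : Fin n → ℝ := fun i => if 0 < (x - c) i then (1:ℝ) else -1
    have hτ : ∀ i, |τ i| = 1 := by
      intro i; simp only [τ]; split_ifs <;> simp
    let ψ : (Fin n → ℝ) →L[ℝ] ℝ := ε • ∑ i, τ i • ContinuousLinearMap.proj (R := ℝ) i
    have hψ : ∀ y, ψ y = ε * ∑ i, τ i * y i := by
      intro y; simp [ψ]
    refine ⟨ξ - (σ • φ + ψ).smulRight a, b + (r + σ * φ c + ψ c) • a, ?_, ?_⟩
    · filter_upwards [g1, g2] with y hy1 hy2
      have e2 : ε * ∑ i, |(y - c) i| = ψ y - ψ c := by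
        rw [← map_sub, hψ]
        congr 1
        exact Finset.sum_congr rfl fun i _ => hy2 i
      rw [hf]
      simp only [rxN, e2]
      rw [hy1]
      simp only [_root_.add_apply, _root_.sub_apply, map_sub,
        ContinuousLinearMap.smulRight_apply, _root_.smul_apply, smul_eq_mul]
      module
    · have e : ξ - (σ • φ + ψ).smulRight a - (ξ - σ • φ.smulRight a) = -(ψ.smulRight a) := by
        ext y
        simp only [_root_.add_apply, _root_.sub_apply,
          ContinuousLinearMap.smulRight_apply, _root_.smul_apply, smul_eq_mul,
          _root_.neg_apply]
        module
      rw [e, norm_neg]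
      refine lt_of_le_of_lt ?_ hερ
      refine ContinuousLinearMap.opNorm_le_bound _ (by positivity) fun y => ?_
      rw [ContinuousLinearMap.smulRight_apply, norm_smul, hψ, Real.norm_eq_abs, abs_mul,
        abs_of_nonneg hε]
      have : |∑ i, τ i * y i| ≤ n * ‖y‖ := by
        refine (Finset.abs_sum_le_sum_abs _ _).trans (le_trans ?_ (rx_sum_le y))
        refine Finset.sum_le_sum fun i _ => ?_
        rw [abs_mul, hτ, one_mul]
      calc ε * |∑ i, τ i * y i| * ‖a‖ ≤ ε * (n * ‖y‖) * ‖a‖ := by gcongr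
        _ = _ := by ring
  have keyS : ∀ x ∈ D, x ∉ Z → φ (x - c) < 0 → x ∈ rxGood D f S := by
    intro x hx hxZ hneg
    obtain ⟨A, d, hA, hA2⟩ := key x hx hxZ
    rw [if_neg (not_lt.2 hneg.le)] at hA2
    refine ⟨hx, A, hS ?_, d, hA⟩
    have e : ξ - (-1 : ℝ) • φ.smulRight a = ξ + φ.smulRight a := by module
    rw [e] at hA2
    exact mem_ball_iff_norm.2 hA2
  have keyU : ∀ x ∈ D, x ∉ Z → x ∈ rxGood D f U := by
    intro x hx hxZ
    by_cases h : φ (x - c) < 0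
    · obtain ⟨hx, A, hA, d⟩ := keyS x hx hxZ h
      exact ⟨hx, A, hSU hA, d⟩
    · have hpos : 0 < φ (x - c) :=
        lt_of_le_of_ne (not_lt.1 h) (fun h' => hxZ (Or.inl h'.symm))
      obtain ⟨A, d, hA, hA2⟩ := key x hx hxZ
      rw [if_pos hpos, one_smul] at hA2
      exact ⟨hx, A, hU (mem_ball_iff_norm.2 hA2), d, hA⟩
  constructor
  · refine measure_mono_null ?_ hZ
    rintro x ⟨hx, hx2⟩
    by_contra h
    exact hx2 (keyU x hx h)
  · let Dm : Set (Fin n → ℝ) := D ∩ {x | φ (x - c) < 0}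
    have hmp := Measure.measurePreserving_sub_left (volume : Measure (Fin n → ℝ)) (c + c)
    have hDm : MeasurableSet Dm :=
      (hDo.inter (isOpen_lt (by fun_prop) continuous_const)).measurableSet
    have hrefl := hmp.measure_preimage hDm.nullMeasurableSet
    have hsub : D ⊆ Dm ∪ ((fun x => c + c - x) ⁻¹' Dm ∪ Z) := by
      intro x hx
      rcases lt_trichotomy (φ (x - c)) 0 with h | h | h
      · exact Or.inl ⟨hx, h⟩
      · exact Or.inr (Or.inr (Or.inl h))
      · refine Or.inr (Or.inl ?_)
        have e : c + c - x - c = -(x - c) := by abel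
        refine ⟨?_, ?_⟩
        · rw [hD] at hx ⊢
          simp only [mem_ofPred_eq] at hx ⊢
          rw [e, rxN_neg]; exact hx
        · simp only [mem_ofPred_eq]
          rw [e, map_neg]; linarith
    have h1 : volume D ≤ volume Dm + volume Dm := by
      refine (measure_mono hsub).trans ((measure_union_le _ _).trans ?_)
      refine add_le_add le_rfl ((measure_union_le _ _).trans ?_)
      rw [hZ, hrefl, add_zero]
    have h2 : volume Dm ≤ volume (rxGood D f S) := by
      have : Dm ⊆ rxGood D f S ∪ Z := by
        rintro x ⟨hx, hx2⟩
        by_cases h : x ∈ Z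
        · exact Or.inr h
        · exact Or.inl (keyS x hx h hx2)
      refine (measure_mono this).trans ((measure_union_le _ _).trans ?_)
      rw [hZ, add_zero]
    calc ENNReal.ofReal (1 / 2) * volume D ≤ ENNReal.ofReal (1 / 2) * (volume Dm + volume Dm) := by
          gcongr
      _ = volume Dm := by
          rw [← two_mul, ← mul_assoc, show (2 : ENNReal) = ENNReal.ofReal 2 by simp,
            ← ENNReal.ofReal_mul (by norm_num)]
          norm_num
      _ ≤ _ := h2

theorem rx_sphere_null {n : ℕ} (φ : (Fin n → ℝ) →L[ℝ] ℝ) {ε : ℝ} (hε : 0 ≤ ε) (c : Fin n → ℝ)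
    {r : ℝ} (hr : 0 < r) :
    volume ({x : Fin n → ℝ | rxN φ ε (x - c) ≤ r} \ {x | rxN φ ε (x - c) < r}) = 0 := by
  have hconv : Convex ℝ {x : Fin n → ℝ | rxN φ ε (x - c) ≤ r} := by
    intro x hx y hy s t hs ht hst
    simp only [mem_ofPred_eq] at hx hy ⊢
    have e : s • x + t • y - c = s • (x - c) + t • (y - c) := by
      have : c = (s + t) • c := by rw [hst, one_smul]
      nth_rewrite 1 [this]
      module
    rw [e]
    refine (rxN_add φ hε _ _).trans ?_
    rw [rxN_smul φ ε _ hs, rxN_smul φ ε _ ht]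
    nlinarith
  refine measure_mono_null ?_ (hconv.addHaar_frontier volume)
  rintro x ⟨hx, hx2⟩
  refine ⟨subset_closure hx, fun hint => ?_⟩
  simp only [mem_ofPred_eq, not_lt] at hx hx2
  have hcont : Continuous fun s : ℝ => c + (1 + s) • (x - c) := by fun_prop
  have h0 : c + (1 + (0:ℝ)) • (x - c) = x := by module
  have hev : ∀ᶠ s in 𝓝 (0:ℝ), c + (1 + s) • (x - c) ∈ {x : Fin n → ℝ | rxN φ ε (x - c) ≤ r} :=
    hcont.continuousAt.eventually (by
      simp only [h0]; exact mem_interior_iff_mem_nhds.1 hint)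
  obtain ⟨d, hd, hball⟩ := Metric.eventually_nhds_iff.1 hev
  have := hball (y := d / 2) (by rw [Real.dist_eq, sub_zero, abs_of_pos] <;> linarith)
  simp only [mem_ofPred_eq, add_sub_cancel_left] at this
  rw [rxN_smul φ ε _ (by linarith)] at this
  nlinarith

theorem rx_cover {n : ℕ} (φ : (Fin n → ℝ) →L[ℝ] ℝ) {ε : ℝ} (hε : 0 < ε) (Ω : Set (Fin n → ℝ))
    (hΩ : IsOpen Ω) {r0 : ℝ} (hr0 : 0 < r0) :
    ∃ I : Set ((Fin n → ℝ) × ℝ), I.Countable ∧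
      (∀ p ∈ I, 0 < p.2 ∧ p.2 ≤ r0 ∧ {x | rxN φ ε (x - p.1) < p.2} ⊆ Ω) ∧
      (∀ p ∈ I, ∀ q ∈ I, p ≠ q →
        Disjoint {x | rxN φ ε (x - p.1) < p.2} {x | rxN φ ε (x - q.1) < q.2}) ∧
      volume (Ω \ ⋃ p ∈ I, {x | rxN φ ε (x - p.1) < p.2}) = 0 := by
  let B : (Fin n → ℝ) × ℝ → Set (Fin n → ℝ) := fun p => {x | rxN φ ε (x - p.1) ≤ p.2}
  let t : Set ((Fin n → ℝ) × ℝ) := {p | 0 < p.2 ∧ p.2 ≤ r0 ∧ B p ⊆ Ω}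
  let κ : ℝ := (‖φ‖ + ε * n + 1)⁻¹
  have hκ0 : 0 < ‖φ‖ + ε * n + 1 := by positivity
  have hκ : 0 < κ := inv_pos.2 hκ0
  have hBsub : ∀ p : (Fin n → ℝ) × ℝ, B p ⊆ Metric.closedBall p.1 (p.2 / ε) := by
    intro p x hx
    rw [mem_closedBall_iff_norm, le_div_iff₀ hε]
    have h1 := rx_le_sum (x - p.1)
    have h2 : rxN φ ε (x - p.1) ≤ p.2 := hx
    unfold rxN at h2
    nlinarith [abs_nonneg (φ (x - p.1))]
  have hBsup : ∀ p : (Fin n → ℝ) × ℝ, Metric.closedBall p.1 (κ * p.2) ⊆ B p := by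
    intro p x hx
    rw [mem_closedBall_iff_norm] at hx
    show rxN φ ε (x - p.1) ≤ p.2
    have h1 := rx_sum_le (x - p.1)
    have h2 := φ.le_opNorm (x - p.1)
    rw [Real.norm_eq_abs] at h2
    have h3 : rxN φ ε (x - p.1) ≤ (‖φ‖ + ε * n + 1) * ‖x - p.1‖ := by
      unfold rxN
      nlinarith [norm_nonneg (x - p.1)]
    have h4 : (‖φ‖ + ε * n + 1) * (κ * p.2) = p.2 := by
      simp only [κ]; field_simp
    nlinarith
  have hcl : ∀ p, IsClosed (B p) := fun p =>
    isClosed_le ((rxN_continuous φ ε).comp (by fun_prop)) continuous_const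
  obtain ⟨I, hIt, hIc, hId, hIv⟩ := Vitali.exists_disjoint_covering_ae
    (volume : Measure (Fin n → ℝ)) Ω t (Real.toNNReal ((3 / ε / κ) ^ n)) (fun p => p.2 / ε)
    (fun p => p.1) B (fun p _ => hBsub p) (by
      intro p hp
      have hp0 : 0 < p.2 := hp.1
      calc volume (Metric.closedBall p.1 (3 * (p.2 / ε)))
          = (Real.toNNReal ((3 / ε / κ) ^ n)) * volume (Metric.closedBall p.1 (κ * p.2)) := by
            rw [Measure.addHaar_closedBall _ _ (by positivity),
              Measure.addHaar_closedBall _ _ (by positivity), ← mul_assoc]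
            congr 1
            have : ((Real.toNNReal ((3 / ε / κ) ^ n) : NNReal) : ENNReal)
                = ENNReal.ofReal ((3 / ε / κ) ^ n) := rfl
            rw [this, ← ENNReal.ofReal_mul (by positivity)]
            congr 1
            simp only [Module.finrank_fin_fun]
            rw [← mul_pow]
            congr 1
            field_simp
        _ ≤ _ := by
            gcongr
            exact hBsup p) (by
      intro p hp
      have hp0 : 0 < p.2 := hp.1
      refine ⟨p.1, mem_interior_iff_mem_nhds.2 (mem_of_superset
        (Metric.closedBall_mem_nhds p.1 (by positivity : 0 < κ * p.2)) (hBsup p))⟩)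
    (fun p _ => hcl p) (by
      intro x hx d hd
      obtain ⟨e, he, hball⟩ := Metric.isOpen_iff.1 hΩ x hx
      refine ⟨(x, min r0 (min (ε * d) (ε * e / 2))), ⟨?_, min_le_left _ _, ?_⟩, ?_, rfl⟩
      · simp only [lt_min_iff]; exact ⟨hr0, by positivity, by positivity⟩
      · refine (hBsub _).trans (Subset.trans ?_ hball)
        apply Metric.closedBall_subset_ball
        rw [div_lt_iff₀ hε]
        refine lt_of_le_of_lt ((min_le_right _ _).trans (min_le_right _ _)) ?_
        nlinarith
      · rw [div_le_iff₀ hε]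
        refine ((min_le_right _ _).trans (min_le_left _ _)).trans ?_
        linarith)
  have hDB : ∀ p : (Fin n → ℝ) × ℝ, {x | rxN φ ε (x - p.1) < p.2} ⊆ B p :=
    fun p x (hx : rxN φ ε (x - p.1) < p.2) => show rxN φ ε (x - p.1) ≤ p.2 from hx.le
  refine ⟨I, hIc, ?_, ?_, ?_⟩
  · intro p hp
    exact ⟨(hIt hp).1, (hIt hp).2.1, (hDB p).trans (hIt hp).2.2⟩
  · intro p hp q hq hpq
    exact (hId hp hq hpq).mono (hDB p) (hDB q)
  · have : Ω \ ⋃ p ∈ I, {x | rxN φ ε (x - p.1) < p.2} ⊆ (Ω \ ⋃ p ∈ I, B p) ∪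
        ⋃ p ∈ I, (B p \ {x | rxN φ ε (x - p.1) < p.2}) := by
      rintro x ⟨hx, hx2⟩
      by_cases h : x ∈ ⋃ p ∈ I, B p
      · obtain ⟨p, hp, hxp⟩ := mem_iUnion₂.1 h
        exact Or.inr (mem_iUnion₂.2 ⟨p, hp, hxp, fun h' => hx2 (mem_iUnion₂.2 ⟨p, hp, h'⟩)⟩)
      · exact Or.inl ⟨hx, h⟩
    refine measure_mono_null this ?_
    rw [measure_union_null_iff, measure_biUnion_null_iff hIc]
    exact ⟨hIv, fun p hp => rx_sphere_null φ hε.le p.1 (hIt hp).1⟩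

theorem rx_lam {n : ℕ} {W : Type*} [NormedAddCommGroup W] [NormedSpace ℝ W] {C : NNReal} {M : ℝ}
    (hC : (C : ℝ) = M + 1) {U S : Set ((Fin n → ℝ) →L[ℝ] W)} (hUo : IsOpen U) (hSo : IsOpen S)
    (hSU : S ⊆ U) (hM : ∀ A ∈ U, ‖A‖ ≤ M) (ξ : (Fin n → ℝ) →L[ℝ] W)
    (φ : (Fin n → ℝ) →L[ℝ] ℝ) (hφ : φ ≠ 0) (a : W) (h1 : ξ + φ.smulRight a ∈ S)
    (h2 : ξ - φ.smulRight a ∈ U) : RxPre C U S (1 / 2) ξ := by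
  intro Ω hΩ hΩb b δ hδ
  obtain ⟨ρ1, hρ1, hb1⟩ := Metric.isOpen_iff.1 hSo _ h1
  obtain ⟨ρ2, hρ2, hb2⟩ := Metric.isOpen_iff.1 hUo _ h2
  let ρ := min 1 (min ρ1 ρ2)
  have hρ : 0 < ρ := by simp only [ρ, lt_min_iff]; exact ⟨one_pos, hρ1, hρ2⟩
  let ε := ρ / (n * ‖a‖ + 1)
  have hden : 0 < n * ‖a‖ + 1 := by positivity
  have hε : 0 < ε := div_pos hρ hden
  have hερ : ε * (n * ‖a‖) < ρ := by
    have : ε * (n * ‖a‖ + 1) = ρ := by simp only [ε]; field_simp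
    linarith
  let r0 := δ / (‖a‖ + 1)
  have hr0 : 0 < r0 := by positivity
  have hr0a : r0 * ‖a‖ ≤ δ := by
    have : r0 * (‖a‖ + 1) = δ := by simp only [r0]; field_simp
    linarith
  obtain ⟨I, hIc, hI, hId, hIv⟩ := rx_cover φ hε Ω hΩ hr0
  have : Countable I := hIc.to_subtype
  let D : I → Set (Fin n → ℝ) := fun p => {x | rxN φ ε (x - p.1.1) < p.1.2}
  let f : I → (Fin n → ℝ) → W := fun p x => ξ x + b + (p.1.2 - rxN φ ε (x - p.1.1)) • a
  have hDo : ∀ i, IsOpen (D i) := fun i =>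
    isOpen_lt ((rxN_continuous φ ε).comp (by fun_prop)) continuous_const
  have hDd : ∀ i j, i ≠ j → Disjoint (D i) (D j) := fun i j hij =>
    hId i.1 i.2 j.1 j.2 (fun h => hij (Subtype.ext h))
  have hDΩ : ∀ i, D i ⊆ Ω := fun i => (hI i.1 i.2).2.2
  have hM1 := hM _ (hSU h1)
  have hM2 := hM _ h2
  have hlip : ∀ s : (Fin n → ℝ) → ℝ, (∀ x y, |s x - s y| ≤ rxN φ ε (x - y)) →
      LipschitzWith C (fun x => ξ x + b + s x • a) := by
    intro s hs
    refine LipschitzWith.of_dist_le_mul fun x y => ?_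
    rw [dist_eq_norm, dist_eq_norm, hC]
    have e : ξ x + b + s x • a - (ξ y + b + s y • a) = ξ (x - y) + (s x - s y) • a := by
      rw [map_sub]; module
    rw [e]
    refine rx_lip ξ φ a hM1 hM2 (x - y) _ (ε * ∑ i, |(x - y) i|) (hs x y)
      (mul_nonneg hε.le (Finset.sum_nonneg fun i _ => abs_nonneg _)) ?_
    have h3 := rx_sum_le (x - y)
    have hρ1 : ρ ≤ 1 := min_le_left _ _
    calc (ε * ∑ i, |(x - y) i|) * ‖a‖ ≤ ε * (n * ‖x - y‖) * ‖a‖ := by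
          gcongr
      _ = (ε * (n * ‖a‖)) * ‖x - y‖ := by ring
      _ ≤ 1 * ‖x - y‖ := by gcongr; linarith
      _ = _ := one_mul _
  have hgl : LipschitzWith C (fun x => ξ x + b) := by
    have := hlip (fun _ => 0) (fun x y => by
      simp only [sub_zero, abs_zero]
      exact add_nonneg (abs_nonneg _)
        (mul_nonneg hε.le (Finset.sum_nonneg fun i _ => abs_nonneg _)))
    simpa using this
  have hfl : ∀ i, LipschitzWith C (f i) := by
    intro i
    refine hlip _ fun x y => ?_
    have e1 := rxN_add φ hε.le (x - y) (y - i.1.1)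
    have e2 := rxN_add φ hε.le (-(x - y)) (x - i.1.1)
    rw [rxN_neg] at e2
    rw [show x - y + (y - i.1.1) = x - i.1.1 by abel] at e1
    rw [show -(x - y) + (x - i.1.1) = y - i.1.1 by abel] at e2
    rw [abs_le]; constructor <;> linarith
  have hfr : ∀ i, ∀ x ∈ frontier (D i), f i x = ξ x + b := by
    intro i x hx
    have : rxN φ ε (x - i.1.1) = i.1.2 :=
      frontier_lt_subset_eq (f := fun x => rxN φ ε (x - i.1.1))
        ((rxN_continuous φ ε).comp (by fun_prop)) continuous_const hx
    simp only [f, this, sub_self, zero_smul, add_zero]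
  obtain ⟨F, hFL, hF1, hF2⟩ := rx_glue C D hDo hDd f (fun x => ξ x + b) hfl hgl hfr
  have hcell := fun i : I => rx_cell (U := U) (S := S) ξ φ hφ a b hε.le hερ hSU
    ((Metric.ball_subset_ball ((min_le_right _ _).trans (min_le_left _ _))).trans hb1)
    ((Metric.ball_subset_ball ((min_le_right _ _).trans (min_le_right _ _))).trans hb2)
    i.1.1 i.1.2 (D i) rfl (f i) rfl
  have hgood : ∀ X i, rxGood (D i) (f i) X ⊆ rxGood Ω F X := by
    rintro X i x ⟨hx, A, hA, c, hc⟩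
    refine ⟨hDΩ i hx, A, hA, c, ?_⟩
    filter_upwards [hc, (hDo i).mem_nhds hx] with y hy hy2
    rw [hF1 i y hy2, hy]
  have hIv' : volume (Ω \ ⋃ i, D i) = 0 := by
    rw [← hIv]; congr 2
    rw [biUnion_eq_iUnion]
  refine ⟨F, hFL, fun x hx => hF2 x fun i hi => hx (hDΩ i hi), ?_, ?_, ?_⟩
  · intro x
    by_cases h : ∃ i, x ∈ D i
    · obtain ⟨i, hi⟩ := h
      rw [hF1 i x hi]
      simp only [f, add_sub_cancel_left]
      have hi' : rxN φ ε (x - i.1.1) < i.1.2 := hi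
      have h0 : 0 ≤ rxN φ ε (x - i.1.1) := add_nonneg (abs_nonneg _)
        (mul_nonneg hε.le (Finset.sum_nonneg fun i _ => abs_nonneg _))
      rw [norm_smul, Real.norm_of_nonneg (by linarith)]
      refine le_trans ?_ hr0a
      gcongr
      linarith [(hI i.1 i.2).2.1]
    · push Not at h
      rw [hF2 x h]; simp [hδ.le]
  · have : Ω \ rxGood Ω F U ⊆ (Ω \ ⋃ i, D i) ∪ ⋃ i, (D i \ rxGood (D i) (f i) U) := by
      rintro x ⟨hx, hx2⟩
      by_cases h : x ∈ ⋃ i, D i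
      · obtain ⟨i, hi⟩ := mem_iUnion.1 h
        exact Or.inr (mem_iUnion.2 ⟨i, hi, fun h' => hx2 (hgood U i h')⟩)
      · exact Or.inl ⟨hx, h⟩
    refine measure_mono_null this ?_
    rw [measure_union_null_iff, measure_iUnion_null_iff]
    exact ⟨hIv', fun i => (hcell i).1⟩
  · calc ENNReal.ofReal (1 / 2) * volume Ω ≤ ENNReal.ofReal (1 / 2) * ∑' i, volume (D i) := by
          gcongr
          calc volume Ω ≤ volume ((Ω \ ⋃ i, D i) ∪ ⋃ i, D i) := by
                apply measure_mono
                intro x hx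
                by_cases h : x ∈ ⋃ i, D i
                · exact Or.inr h
                · exact Or.inl ⟨hx, h⟩
            _ ≤ volume (Ω \ ⋃ i, D i) + volume (⋃ i, D i) := measure_union_le _ _
            _ ≤ _ := by rw [hIv', zero_add]; exact measure_iUnion_le _
      _ = ∑' i, ENNReal.ofReal (1 / 2) * volume (D i) := ENNReal.tsum_mul_left.symm
      _ ≤ ∑' i, volume (rxGood (D i) (f i) S) := ENNReal.tsum_le_tsum fun i => (hcell i).2
      _ = volume (⋃ i, rxGood (D i) (f i) S) := by
          rw [measure_iUnion]
          · intro i j hij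
            exact (hDd i j hij).mono (fun x hx => hx.1) (fun x hx => hx.1)
          · exact fun i => (rxGood_isOpen (hDo i) _ _).measurableSet
      _ ≤ _ := measure_mono (iUnion_subset fun i => hgood S i)

theorem rx_chain {n : ℕ} {W : Type*} [NormedAddCommGroup W] [NormedSpace ℝ W] {C : NNReal} {M : ℝ}
    (hC : (C : ℝ) = M + 1) {U T : Set ((Fin n → ℝ) →L[ℝ] W)} (hUo : IsOpen U) (hTo : IsOpen T)
    (hTU : T ⊆ U) (hM : ∀ A ∈ U, ‖A‖ ≤ M) (J : ℕ) :
    ∀ (ξ : (Fin n → ℝ) →L[ℝ] W) (η : ℕ → (Fin n → ℝ) →L[ℝ] W),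
      (∀ j < J, ∃ φ : (Fin n → ℝ) →L[ℝ] ℝ, φ ≠ 0 ∧ ∃ a : W, η j = φ.smulRight a) →
      (∀ j < J, ξ + ∑ k ∈ Finset.range j, η k - η j ∈ U ∧
        ξ + ∑ k ∈ Finset.range j, η k + η j ∈ U) →
      ξ + ∑ k ∈ Finset.range J, η k ∈ T →
      ∀ᶠ A in 𝓝 ξ, RxPre C U T ((1 / 2) ^ J) A := by
  have hMC : ∀ A ∈ U, ‖A‖ ≤ C := fun A hA => by rw [hC]; linarith [hM A hA]
  induction J with
  | zero =>
    intro ξ η _ _ h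
    simp only [Finset.range_zero, Finset.sum_empty, add_zero] at h
    filter_upwards [hTo.mem_nhds h] with A hA
    exact rx_triv (hMC A (hTU hA)) (hTU hA) (Or.inr ⟨by simp, hA⟩)
  | succ J ih =>
    intro ξ η hη hseg hT
    have e : ∀ j, ξ + η 0 + ∑ k ∈ Finset.range j, η (k + 1)
        = ξ + ∑ k ∈ Finset.range (j + 1), η k := by
      intro j
      rw [Finset.sum_range_succ']; abel
    have := ih (ξ + η 0) (fun k => η (k + 1)) (fun j hj => hη (j + 1) (by omega))
      (fun j hj => by rw [e j]; exact hseg (j + 1) (by omega)) (by rw [e J]; exact hT)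
    have h0 := hseg 0 (by omega)
    simp only [Finset.range_zero, Finset.sum_empty, add_zero] at h0
    obtain ⟨S, hS, hSo, hξS⟩ := eventually_nhds_iff.1 (this.and (hUo.mem_nhds h0.2))
    obtain ⟨φ, hφ, a, ha⟩ := hη 0 (by omega)
    have c1 : ∀ᶠ A in 𝓝 ξ, A + η 0 ∈ S :=
      (continuous_id.add continuous_const).continuousAt.eventually (hSo.mem_nhds hξS)
    have c2 : ∀ᶠ A in 𝓝 ξ, A - η 0 ∈ U :=
      (continuous_id.sub continuous_const).continuousAt.eventually (hUo.mem_nhds h0.1)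
    filter_upwards [c1, c2] with A hA1 hA2
    rw [ha] at hA1 hA2
    have hSU : S ⊆ U := fun A hA => (hS A hA).2
    have hl := rx_lam hC hUo hSo hSU hM A φ hφ a hA1 hA2
    have := rx_comp (T := T) hSU (by norm_num) le_rfl (l := (1 / 2) ^ J) (by positivity) hl
      (fun A hA => (hS A hA).1) (fun A hA => rx_triv (hMC A hA) hA (Or.inl rfl))
    rw [zero_add, sub_zero, ← pow_succ] at this
    exact this

theorem rx_iter {n : ℕ} {W : Type*} [NormedAddCommGroup W] [NormedSpace ℝ W] {C : NNReal}
    {U T : Set ((Fin n → ℝ) →L[ℝ] W)} (hTU : T ⊆ U) (hMC : ∀ A ∈ U, ‖A‖ ≤ C) {θ : ℝ}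
    (hθ : 0 ≤ θ) (hθ1 : θ ≤ 1) (h : ∀ A ∈ U, RxPre C U T θ A) (m : ℕ) :
    ∀ A ∈ U, RxPre C U T (1 - (1 - θ) ^ m) A := by
  induction m with
  | zero => intro A hA; exact rx_triv (hMC A hA) hA (Or.inl (by simp))
  | succ m ih =>
    intro A hA
    have hp : (1 - θ) ^ m ≤ 1 := pow_le_one₀ (by linarith) (by linarith)
    have hp0 : 0 ≤ (1 - θ) ^ m := pow_nonneg (by linarith) _
    have := rx_comp (T := T) hTU hθ (m := 1 - (1 - θ) ^ m) (l := 1) (by linarith) (by linarith)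
      (h A hA) (fun B hB => rx_triv (hMC B (hTU hB)) (hTU hB) (Or.inr ⟨rfl, hB⟩)) ih
    convert this using 1
    ring

theorem rx_mono {n : ℕ} {W : Type*} [NormedAddCommGroup W] [NormedSpace ℝ W] {C : NNReal}
    {U T : Set ((Fin n → ℝ) →L[ℝ] W)} {θ θ' : ℝ} (hθ : θ' ≤ θ) {ξ : (Fin n → ℝ) →L[ℝ] W}
    (h : RxPre C U T θ ξ) : RxPre C U T θ' ξ := by
  intro Ω hΩ hb b ε hε
  obtain ⟨u, h1, h2, h3, h4, h5⟩ := h Ω hΩ hb b ε hε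
  refine ⟨u, h1, h2, h3, h4, le_trans ?_ h5⟩
  gcongr

theorem rx_piecewise {N n : ℕ} {Ω : Set (Fin n → ℝ)} (hΩ : IsOpen Ω)
    (u : (Fin n → ℝ) → Fin N → ℝ) (hu : Continuous u)
    (U : Set ((Fin n → ℝ) →L[ℝ] (Fin N → ℝ))) (h : volume (Ω \ rxGood Ω u U) = 0) :
    PiecewiseAffineOn u Ω := by
  refine ⟨hu.continuousOn, ?_⟩
  let Q : ((Fin n → ℝ) →L[ℝ] (Fin N → ℝ)) × (Fin N → ℝ) → Set (Fin n → ℝ) :=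
    fun p => Ω ∩ interior {x | u x = p.1 x + p.2}
  have hQ : ∀ p x, x ∈ Q p ↔ x ∈ Ω ∧ ∀ᶠ y in 𝓝 x, u y = p.1 y + p.2 := by
    intro p x
    simp only [Q, mem_inter_iff, mem_interior_iff_mem_nhds]
    rfl
  let ι := {p : ((Fin n → ℝ) →L[ℝ] (Fin N → ℝ)) × (Fin N → ℝ) // (Q p).Nonempty}
  have hPo : ∀ i : ι, IsOpen (Q i.1) := fun i => hΩ.inter isOpen_interior
  have hPd : ∀ i j : ι, i ≠ j → Disjoint (Q i.1) (Q j.1) := by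
    intro i j hij
    rw [Set.disjoint_left]
    intro x hx hx'
    have := rx_unique ((hQ _ _).1 hx).2 ((hQ _ _).1 hx').2
    exact hij (Subtype.ext (Prod.ext this.1 this.2))
  have hcount : Countable ι :=
    Pairwise.countable_of_isOpen_disjoint (s := fun i : ι => Q i.1) (fun i j h => hPd i j h) hPo
      (fun i => i.2)
  obtain ⟨e, he⟩ := exists_injective_nat ι
  refine ⟨fun k => ⋃ i : ι, ⋃ _ : e i = k, Q i.1, ?_, ?_, ?_, ?_, ?_⟩
  · exact fun k => isOpen_iUnion fun i => isOpen_iUnion fun _ => hPo i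
  · exact fun k => iUnion_subset fun i => iUnion_subset fun _ => inter_subset_left
  · intro k l hkl
    simp only [disjoint_iUnion_left, disjoint_iUnion_right]
    intro i hi j hj
    apply hPd
    rintro rfl
    exact hkl (by omega)
  · refine measure_mono_null ?_ h
    rintro x ⟨hx, hx2⟩
    refine ⟨hx, ?_⟩
    rintro ⟨_, A, _, c, hc⟩
    have hxQ : x ∈ Q (A, c) := (hQ _ _).2 ⟨hx, hc⟩
    apply hx2
    simp only [mem_iUnion]
    exact ⟨_, ⟨(A, c), ⟨x, hxQ⟩⟩, rfl, hxQ⟩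
  · intro k
    by_cases hk : ∃ i : ι, e i = k
    · obtain ⟨i, rfl⟩ := hk
      refine ⟨LinearMap.toMatrix' i.1.1.toLinearMap, i.1.2, ?_⟩
      intro x hx
      simp only [mem_iUnion] at hx
      obtain ⟨j, hj, hxj⟩ := hx
      have := he hj
      subst this
      rw [LinearMap.toMatrix'_mulVec]
      exact ((hQ _ _).1 hxj).2.self_of_nhds
    · push Not at hk
      refine ⟨0, 0, ?_⟩
      intro x hx
      simp only [mem_iUnion] at hx
      obtain ⟨j, hj, _⟩ := hx
      exact absurd hj (hk j)

theorem rx_rank_one {N n : ℕ} (η : Mat N n) (h : η.rank = 1) :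
    ∃ φ : (Fin n → ℝ) →L[ℝ] ℝ, φ ≠ 0 ∧ ∃ a : Fin N → ℝ,
      LinearMap.toContinuousLinearMap (Matrix.toLin' η) = φ.smulRight a := by
  rw [Matrix.rank, finrank_eq_one_iff'] at h
  obtain ⟨⟨a, ha⟩, hne, hspan⟩ := h
  have ha0 : a ≠ 0 := fun h => hne (Subtype.ext h)
  have hx : ∀ x, ∃ c : ℝ, c • a = η.mulVec x := by
    intro x
    obtain ⟨c, hc⟩ := hspan ⟨η.mulVec x, ⟨x, rfl⟩⟩
    exact ⟨c, congrArg Subtype.val hc⟩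
  choose φ0 hφ0 using hx
  have inj : ∀ c d : ℝ, c • a = d • a → c = d := fun c d h => smul_left_injective ℝ ha0 h
  let φ : (Fin n → ℝ) →ₗ[ℝ] ℝ :=
    { toFun := φ0
      map_add' := fun x y => inj _ _ (by
        rw [hφ0, add_smul, hφ0, hφ0, Matrix.mulVec_add])
      map_smul' := fun c x => inj _ _ (by
        rw [hφ0, smul_assoc, hφ0, Matrix.mulVec_smul]; rfl) }
  refine ⟨LinearMap.toContinuousLinearMap φ, ?_, a, ?_⟩
  · intro h0
    obtain ⟨x, hx⟩ := ha
    have h1 : φ0 x = 0 := congrArg (fun f => f x) h0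
    have h2 := hφ0 x
    rw [h1, zero_smul] at h2
    exact ha0 (hx.symm.trans h2.symm)
  · ext1 x
    exact (hφ0 x).symm

/-- Matrices as continuous linear maps. -/
noncomputable def rxE (N n : ℕ) : Mat N n ≃ₗ[ℝ] ((Fin n → ℝ) →L[ℝ] (Fin N → ℝ)) :=
  (Matrix.toLin').trans LinearMap.toContinuousLinearMap

theorem rxE_cont (N n : ℕ) : Continuous (rxE N n) :=
  LinearMap.continuous_of_finiteDimensional (rxE N n).toLinearMap

theorem rxE_symm_cont (N n : ℕ) : Continuous (rxE N n).symm :=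
  LinearMap.continuous_of_finiteDimensional (rxE N n).symm.toLinearMap

theorem rx_matGrad {N n : ℕ} {u : (Fin n → ℝ) → Fin N → ℝ} {x : Fin n → ℝ}
    {A : (Fin n → ℝ) →L[ℝ] (Fin N → ℝ)} {c : Fin N → ℝ} (h : ∀ᶠ y in 𝓝 x, u y = A y + c) :
    matGrad u x = (rxE N n).symm A := by
  have : HasFDerivAt u A x := (A.hasFDerivAt.add_const c).congr_of_eventuallyEq h
  rw [matGrad, this.fderiv]
  rfl

theorem rx_main {N n : ℕ} (E K : Set (Mat N n))
    (hK : Bornology.IsBounded K)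
    (hH : ∀ δ > 0, ∃ L : ℕ, ∀ ξ ∈ interior K \ Metric.thickening δ E,
      ∃ J : ℕ, J ≤ L ∧ ∃ η : ℕ → Mat N n,
        (∀ j < J, (η j).rank = 1) ∧
        (∀ j < J, segment ℝ (ξ + ∑ k ∈ Finset.range j, η k - η j)
            (ξ + ∑ k ∈ Finset.range j, η k + η j) ⊆ interior K) ∧
        ξ + ∑ k ∈ Finset.range J, η k ∈ Metric.thickening δ E) :
    HasRelaxationProperty (interior K) E := by
  intro Ω hΩ hΩb ξ hξ b
  let U : Set ((Fin n → ℝ) →L[ℝ] (Fin N → ℝ)) := (rxE N n).symm ⁻¹' interior K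
  have hUo : IsOpen U := isOpen_interior.preimage (rxE_symm_cont N n)
  obtain ⟨M0, hM0⟩ : ∃ M : ℝ, ∀ A ∈ U, ‖A‖ ≤ M := by
    obtain ⟨L, hL0, hL⟩ := SemilinearMapClass.bound_of_continuous (rxE N n).toLinearMap
      (rxE_cont N n)
    obtain ⟨R, hR⟩ := isBounded_iff_forall_norm_le.1 hK
    refine ⟨L * R, fun A hA => ?_⟩
    have h1 : (rxE N n).toLinearMap ((rxE N n).symm A) = A := (rxE N n).apply_symm_apply A
    rw [← h1]
    exact (hL _).trans
      (mul_le_mul_of_nonneg_left (hR _ (interior_subset hA)) hL0.le)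
  let M := max M0 0
  have hM : ∀ A ∈ U, ‖A‖ ≤ M := fun A hA => (hM0 A hA).trans (le_max_left _ _)
  let C : NNReal := ⟨M + 1, by have : 0 ≤ M := le_max_right _ _; linarith⟩
  have hC : (C : ℝ) = M + 1 := rfl
  have hMC : ∀ A ∈ U, ‖A‖ ≤ C := fun A hA => by rw [hC]; linarith [hM A hA]
  obtain ⟨R, hR0, hR⟩ : ∃ R : ℝ, 0 ≤ R ∧ ∀ A ∈ interior K, Metric.infDist A E ≤ R := by
    rcases E.eq_empty_or_nonempty with h | ⟨e, he⟩
    · exact ⟨0, le_rfl, fun A _ => by rw [h, Metric.infDist_empty]⟩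
    · obtain ⟨R, hR⟩ := isBounded_iff_forall_norm_le.1 hK
      refine ⟨|R| + ‖e‖, by positivity, fun A hA => (Metric.infDist_le_dist_of_mem he).trans ?_⟩
      rw [dist_eq_norm]
      exact (norm_sub_le _ _).trans
        (add_le_add_left ((hR _ (interior_subset hA)).trans (le_abs_self R)) _)
  have hξU : rxE N n ξ ∈ U := by
    show (rxE N n).symm (rxE N n ξ) ∈ interior K
    rw [LinearEquiv.symm_apply_apply]; exact hξ
  have step : ∀ δ : ℝ, 0 < δ → ∃ u : (Fin n → ℝ) → Fin N → ℝ, LipschitzWith C u ∧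
      (∀ x, x ∉ Ω → u x = ξ.mulVec x + b) ∧ (∀ x, ‖u x - (ξ.mulVec x + b)‖ ≤ δ) ∧
      volume (Ω \ rxGood Ω u U) = 0 ∧
      ENNReal.ofReal (1 - δ) * volume Ω ≤
        volume (rxGood Ω u (U ∩ (rxE N n).symm ⁻¹' (Metric.thickening δ E))) := by
    intro δ hδ
    obtain ⟨L, hL⟩ := hH δ hδ
    let T := U ∩ (rxE N n).symm ⁻¹' (Metric.thickening δ E)
    have hTo : IsOpen T := hUo.inter (Metric.isOpen_thickening.preimage (rxE_symm_cont N n))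
    have hTU : T ⊆ U := inter_subset_left
    have hbase : ∀ A ∈ U, RxPre C U T ((1 / 2) ^ L) A := by
      intro A hA
      by_cases hAT : A ∈ T
      · exact rx_mono (pow_le_one₀ (by norm_num) (by norm_num))
          (rx_triv (hMC A hA) hA (Or.inr ⟨rfl, hAT⟩))
      · obtain ⟨J, hJ, η, hη1, hη2, hη3⟩ := hL ((rxE N n).symm A) ⟨hA, fun h => hAT ⟨hA, h⟩⟩
        have hsum : ∀ j, (rxE N n).symm (A + ∑ k ∈ Finset.range j, rxE N n (η k))
            = (rxE N n).symm A + ∑ k ∈ Finset.range j, η k := by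
          intro j
          simp [map_add, map_sum]
        have hseg : ∀ j < J, A + ∑ k ∈ Finset.range j, rxE N n (η k) - rxE N n (η j) ∈ U ∧
            A + ∑ k ∈ Finset.range j, rxE N n (η k) + rxE N n (η j) ∈ U := by
          intro j hj
          constructor
          · show (rxE N n).symm _ ∈ interior K
            rw [map_sub, hsum, LinearEquiv.symm_apply_apply]
            exact hη2 j hj (left_mem_segment ℝ _ _)
          · show (rxE N n).symm _ ∈ interior K
            rw [map_add, hsum, LinearEquiv.symm_apply_apply]
            exact hη2 j hj (right_mem_segment ℝ _ _)
        have hend : A + ∑ k ∈ Finset.range J, rxE N n (η k) ∈ T := by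
          refine ⟨?_, ?_⟩
          · rcases J with _ | J
            · simpa using hA
            · rw [Finset.sum_range_succ, ← add_assoc]
              exact (hseg J (by omega)).2
          · show (rxE N n).symm _ ∈ Metric.thickening δ E
            rw [hsum]; exact hη3
        have := (rx_chain hC hUo hTo hTU hM J A (fun k => rxE N n (η k))
          (fun j hj => rx_rank_one (η j) (hη1 j hj)) hseg hend).self_of_nhds
        exact rx_mono (pow_le_pow_of_le_one (by norm_num) (by norm_num) hJ) this
    have hθ0 : (0:ℝ) < (1 / 2) ^ L := by positivity
    have hθ1 : ((1:ℝ) / 2) ^ L ≤ 1 := pow_le_one₀ (by norm_num) (by norm_num)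
    obtain ⟨m, hm⟩ := exists_pow_lt_of_lt_one hδ (by linarith : 1 - ((1:ℝ) / 2) ^ L < 1)
    exact rx_mono (by linarith) (rx_iter hTU hMC hθ0.le hθ1 hbase m _ hξU) Ω hΩ hΩb b δ hδ
  have hδpos : ∀ ν : ℕ, (0:ℝ) < 1 / ((ν : ℝ) + 1) := fun ν => Nat.one_div_pos_of_nat
  choose u huL hub huε huU huT using fun ν : ℕ => step (1 / ((ν : ℝ) + 1)) (hδpos ν)
  have hfin : volume Ω < ⊤ := hΩb.measure_lt_top
  have hlim : Tendsto (fun ν : ℕ => 1 / ((ν : ℝ) + 1)) atTop (𝓝 0) :=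
    tendsto_one_div_add_atTop_nhds_zero_nat
  have hae : ∀ ν, ∀ᵐ x ∂(volume.restrict Ω), x ∈ rxGood Ω (u ν) U := by
    intro ν
    rw [ae_restrict_iff' hΩ.measurableSet, ae_iff]
    convert huU ν using 2
    ext x; simp
  have hgU : ∀ ν, ∀ x ∈ rxGood Ω (u ν) U, matGrad (u ν) x ∈ interior K := by
    rintro ν x ⟨_, A, hA, c, hc⟩
    rw [rx_matGrad hc]; exact hA
  refine ⟨u, fun ν => rx_piecewise hΩ _ (huL ν).continuous U (huU ν), fun ν => ⟨⟨C,
    (huL ν).lipschitzOnWith⟩, fun x hx => hub ν x ?_⟩, ?_, ⟨C, fun ν => (huL ν).lipschitzOnWith⟩,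
    ?_, ?_⟩
  · rw [hΩ.frontier_eq] at hx; exact hx.2
  · intro ν
    filter_upwards [hae ν] with x hx
    exact Or.inr (hgU ν x hx)
  · rw [Metric.tendstoUniformlyOn_iff]
    intro ε hε
    filter_upwards [hlim.eventually (gt_mem_nhds hε)] with ν hν x _
    rw [dist_comm, dist_eq_norm]
    exact (huε ν x).trans_lt hν
  · have hbound : ∀ ν : ℕ, ∫ x in Ω, Metric.infDist (matGrad (u ν) x) E
        ≤ (1 / ((ν : ℝ) + 1)) * ((1 + R) * volume.real Ω) := by
      intro ν
      set δ := 1 / ((ν : ℝ) + 1) with hδdef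
      have hδ := hδpos ν
      rw [← hδdef] at hδ
      set G := rxGood Ω (u ν) (U ∩ (rxE N n).symm ⁻¹' (Metric.thickening δ E)) with hG
      have hGo : IsOpen G := rxGood_isOpen hΩ _ _
      have hGΩ : G ⊆ Ω := fun x hx => hx.1
      have hGd : ∀ x ∈ G, Metric.infDist (matGrad (u ν) x) E ≤ δ := by
        rintro x ⟨_, A, hA, c, hc⟩
        rw [rx_matGrad hc]
        have h2 : Metric.infEDist ((rxE N n).symm A) E < ENNReal.ofReal δ := hA.2
        exact ENNReal.toReal_le_of_le_ofReal hδ.le h2.le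
      have hδ1 : δ ≤ 1 := by
        rw [hδdef, div_le_one (by positivity)]
        have : (0:ℝ) ≤ ν := Nat.cast_nonneg ν
        linarith
      have hvG : (1 - δ) * volume.real Ω ≤ volume.real G := by
        have := ENNReal.toReal_mono (measure_lt_top_of_subset hGΩ hfin.ne).ne (huT ν)
        rw [ENNReal.toReal_mul, ENNReal.toReal_ofReal (by linarith)] at this
        exact this
      have hvol : volume.real (Ω \ G) ≤ δ * volume.real Ω := by
        rw [measureReal_sdiff hGΩ hGo.measurableSet]
        linarith
      have hint : Integrable (fun x => δ + (Ω \ G).indicator (fun _ => R) x)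
          (volume.restrict Ω) := by
        have : IsFiniteMeasure (volume.restrict Ω) := ⟨by simpa using hfin⟩
        refine (integrable_const δ).add ((integrable_const R).indicator ?_)
        exact hΩ.measurableSet.diff hGo.measurableSet
      calc ∫ x in Ω, Metric.infDist (matGrad (u ν) x) E
          ≤ ∫ x in Ω, (δ + (Ω \ G).indicator (fun _ => R) x) := by
            refine integral_mono_of_nonneg (Eventually.of_forall fun x => Metric.infDist_nonneg)
              hint ?_
            filter_upwards [hae ν] with x hx
            by_cases h : x ∈ G
            · rw [indicator_of_notMem (fun h' => h'.2 h), add_zero]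
              exact hGd x h
            · rw [indicator_of_mem (show x ∈ Ω \ G from ⟨hx.1, h⟩)]
              linarith [hR _ (hgU ν x hx)]
        _ = δ * volume.real Ω + R * volume.real (Ω \ G) := by
            have : IsFiniteMeasure (volume.restrict Ω) := ⟨by simpa using hfin⟩
            have hmeas := hΩ.measurableSet.diff hGo.measurableSet
            rw [integral_add (integrable_const δ) ((integrable_const R).indicator hmeas),
              integral_indicator_const _ hmeas, integral_const]
            rw [measureReal_restrict_apply hmeas, inter_eq_left.2 sdiff_subset]
            simp [mul_comm]
        _ ≤ _ := by nlinarith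
    refine squeeze_zero (fun ν => integral_nonneg fun x => Metric.infDist_nonneg) hbound ?_
    simpa using hlim.mul_const ((1 + R) * volume.real Ω)

end Core

section Statements

open Metric Set

theorem stmt3 {N n : ℕ} (E K : Set (Mat N n)) (hE : IsCompact E)
    (hK : Bornology.IsBounded K)
    (hH : ∀ δ > 0, ∃ L : ℕ, ∀ ξ ∈ interior K \ Metric.thickening δ E,
      ∃ J : ℕ, J ≤ L ∧ ∃ η : ℕ → Mat N n,
        (∀ j < J, (η j).rank = 1) ∧
        (∀ j < J, segment ℝ (ξ + ∑ k ∈ Finset.range j, η k - η j)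
            (ξ + ∑ k ∈ Finset.range j, η k + η j) ⊆ interior K) ∧
        ξ + ∑ k ∈ Finset.range J, η k ∈ Metric.thickening δ E) :
    HasRelaxationProperty (interior K) E := by
  exact rx_main E K hK hH

end Statements
end
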